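/- Fix γ with 0 < γ < 1. Then Σ_{p ≤ x} ((p+1)^γ − p^γ) = x^γ/log x + O(x^γ/(log x)^2) as x → ∞, where the sum is over primes p ≤ x. -/

import Mathlib

open Finset

/-- The difference between `n⁻ˢ` and `∫ u⁻ˢ` over `[n, n + 1]`. -/
noncomputable def zetaTerm (n : ℕ) (s : ℂ) : ℂ :=
  (n : ℂ) ^ (-s) - (((n + 1 : ℕ) : ℂ) ^ (1 - s) - (n : ℂ) ^ (1 - s)) / (1 - s)

lemma norm_cpow_neg_sub_cpow_neg_le {s : ℂ} (hs : 0 < s.re) {a u : ℝ} (ha : 0 < a)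
    (hu : u ∈ Set.Icc a (a + 1)) :
    ‖(a : ℂ) ^ (-s) - (u : ℂ) ^ (-s)‖ ≤ ‖s‖ * a ^ (-s.re - 1) := by
  have hs0 : -s ≠ 0 := by
    intro h; rw [neg_eq_zero] at h; simp [h] at hs
  have key := Convex.norm_image_sub_le_of_norm_hasDerivWithin_le (𝕜 := ℝ)
    (f := fun u : ℝ => (u : ℂ) ^ (-s)) (f' := fun u : ℝ => -s * (u : ℂ) ^ (-s - 1))
    (s := Set.Icc a (a + 1)) (C := ‖s‖ * a ^ (-s.re - 1)) (x := a) (y := u)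
    (fun v hv => (hasDerivAt_ofReal_cpow_const (ha.trans_le hv.1).ne' hs0).hasDerivWithinAt)
    (fun v hv => ?_) (convex_Icc _ _) (by simp) hu
  · rw [norm_sub_rev]
    refine key.trans ?_
    have : ‖u - a‖ ≤ 1 := by
      rw [Real.norm_eq_abs, abs_le]; constructor <;> linarith [hu.1, hu.2]
    exact mul_le_of_le_one_right (by positivity) this
  · rw [norm_mul, norm_neg, Complex.norm_cpow_eq_rpow_re_of_pos (ha.trans_le hv.1)]
    gcongr
    simp only [Complex.sub_re, Complex.neg_re, Complex.one_re]
    exact Real.rpow_le_rpow_of_nonpos ha hv.1 (by linarith)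

lemma norm_zetaTerm_le {s : ℂ} (hs : 0 < s.re) (hs1 : s ≠ 1) {n : ℕ} (hn : 0 < n) :
    ‖zetaTerm n s‖ ≤ ‖s‖ * (n : ℝ) ^ (-s.re - 1) := by
  have hs0 : 1 - s ≠ 0 := sub_ne_zero.2 hs1.symm
  have hn' : (0 : ℝ) < n := by exact_mod_cast hn
  have key := Convex.norm_image_sub_le_of_norm_hasDerivWithin_le (𝕜 := ℝ)
    (f := fun u : ℝ => (u : ℂ) * (n : ℂ) ^ (-s) - (u : ℂ) ^ (1 - s) / (1 - s))
    (f' := fun u : ℝ => (n : ℂ) ^ (-s) - (u : ℂ) ^ (-s))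
    (s := Set.Icc (n : ℝ) (n + 1)) (C := ‖s‖ * (n : ℝ) ^ (-s.re - 1)) (x := n) (y := n + 1)
    (fun v hv => ?_)
    (fun v hv => by simpa using norm_cpow_neg_sub_cpow_neg_le hs hn' hv)
    (convex_Icc _ _) (by simp) (by simp)
  · have : zetaTerm n s = ((n + 1 : ℝ) : ℂ) * (n : ℂ) ^ (-s) -
        ((n + 1 : ℝ) : ℂ) ^ (1 - s) / (1 - s) -
        (((n : ℝ) : ℂ) * (n : ℂ) ^ (-s) - ((n : ℝ) : ℂ) ^ (1 - s) / (1 - s)) := by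
      simp only [zetaTerm]; push_cast; ring
    rw [this]
    simpa using key
  · have h1 := (hasDerivAt_ofReal_cpow_const (hn'.trans_le hv.1).ne' hs0).div_const (1 - s)
    have h2 := (Complex.ofRealCLM.hasDerivAt (x := v)).mul_const ((n : ℂ) ^ (-s))
    have h3 := h2.sub h1
    have e : (1 - s) * (v : ℂ) ^ (1 - s - 1) / (1 - s) = (v : ℂ) ^ (-s) := by
      rw [mul_div_cancel_left₀ _ hs0]; congr 1; ring
    rw [e] at h3
    refine (HasDerivAt.congr_deriv h3 (by simp)).hasDerivWithinAt

lemma summable_norm_zetaTerm_bound {σ : ℝ} (hσ : 0 < σ) (M : ℕ) :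
    Summable fun k : ℕ => ((M + k + 1 : ℕ) : ℝ) ^ (-σ - 1) := by
  have := (Real.summable_nat_rpow (p := -σ - 1)).2 (by linarith)
  have h2 := (summable_nat_add_iff (M + 1)).2 this
  refine h2.congr fun k => ?_
  congr 2; ring

lemma summable_zetaTerm {s : ℂ} (hs : 0 < s.re) (hs1 : s ≠ 1) (M : ℕ) :
    Summable fun k : ℕ => zetaTerm (M + k + 1) s :=
  Summable.of_norm_bounded ((summable_norm_zetaTerm_bound hs M).mul_left ‖s‖)
    fun k => norm_zetaTerm_le hs hs1 (by omega)

lemma differentiableOn_tsum_zetaTerm (M : ℕ) :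
    DifferentiableOn ℂ (fun s => ∑' k : ℕ, zetaTerm (M + k + 1) s) {s | 0 < s.re ∧ s ≠ 1} := by
  intro s ⟨hs, hs1⟩
  set U : Set ℂ := {z | s.re / 2 < z.re ∧ z ≠ 1 ∧ ‖z‖ < ‖s‖ + 1} with hU
  have hUo : IsOpen U := by
    refine (isOpen_lt continuous_const Complex.continuous_re).inter ?_
    exact isOpen_ne.inter (isOpen_lt continuous_norm continuous_const)
  have hsU : s ∈ U := ⟨by linarith, hs1, by linarith⟩
  have key : DifferentiableOn ℂ (fun s => ∑' k : ℕ, zetaTerm (M + k + 1) s) U := by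
    refine Complex.differentiableOn_tsum_of_summable_norm
      (u := fun k : ℕ => (‖s‖ + 1) * ((M + k + 1 : ℕ) : ℝ) ^ (-(s.re / 2) - 1))
      ((summable_norm_zetaTerm_bound (by linarith) M).mul_left _) (fun k => ?_) hUo ?_
    · intro z hz
      have h1 : ((M + k + 1 : ℕ) : ℂ) ≠ 0 := Nat.cast_ne_zero.2 (by omega)
      have h2 : ((M + k + 1 + 1 : ℕ) : ℂ) ≠ 0 := Nat.cast_ne_zero.2 (by omega)
      have h3 : 1 - z ≠ 0 := sub_ne_zero.2 hz.2.1.symm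
      unfold zetaTerm
      refine DifferentiableAt.differentiableWithinAt ?_
      refine DifferentiableAt.sub (DifferentiableAt.const_cpow (by fun_prop) (Or.inl h1))
        (DifferentiableAt.div (DifferentiableAt.sub
          (DifferentiableAt.const_cpow (by fun_prop) (Or.inl h2))
          (DifferentiableAt.const_cpow (by fun_prop) (Or.inl h1))) (by fun_prop) h3)
    · intro k z hz
      refine (norm_zetaTerm_le (by linarith [hz.1]) hz.2.1 (by omega)).trans ?_
      gcongr
      · exact hz.2.2.le
      · exact_mod_cast (by omega)
      · exact hz.1.le
  exact (key.differentiableAt (hUo.mem_nhds hsU)).differentiableWithinAt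

lemma riemannZeta_eq_sum_add_tsum_of_one_lt_re {s : ℂ} (hs : 1 < s.re) (M : ℕ) :
    riemannZeta s = ∑ n ∈ range M, ((n + 1 : ℕ) : ℂ) ^ (-s) +
      ((M + 1 : ℕ) : ℂ) ^ (1 - s) / (s - 1) + ∑' k : ℕ, zetaTerm (M + k + 1) s := by
  have hs1 : s ≠ 1 := by rintro rfl; simp at hs
  have h1s : s - 1 ≠ 0 := sub_ne_zero.2 hs1
  have h1s' : 1 - s ≠ 0 := sub_ne_zero.2 hs1.symm
  have hsum : Summable fun n : ℕ => ((n + 1 : ℕ) : ℂ) ^ (-s) := by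
    have := (summable_nat_add_iff 1).2 (Complex.summable_one_div_nat_cpow.2 hs)
    refine this.congr fun n => ?_
    rw [Complex.cpow_neg, one_div]
  have hz : riemannZeta s = ∑' n : ℕ, ((n + 1 : ℕ) : ℂ) ^ (-s) := by
    rw [zeta_eq_tsum_one_div_nat_add_one_cpow hs]
    refine tsum_congr fun n => ?_
    rw [Complex.cpow_neg, one_div]; push_cast; rfl
  have hsum' : Summable fun k : ℕ => ((M + k + 1 : ℕ) : ℂ) ^ (-s) := by
    refine ((summable_nat_add_iff M).2 hsum).congr fun k => ?_
    congr 2; ring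
  have ht := summable_zetaTerm (by linarith) hs1 M
  set a : ℕ → ℂ := fun k => ((M + k + 1 : ℕ) : ℂ) ^ (1 - s) with ha
  have hd : Summable fun k : ℕ => (a (k + 1) - a k) / (1 - s) := by
    refine (hsum'.sub ht).congr fun k => ?_
    simp only [zetaTerm, ha, ← add_assoc, Nat.add_right_comm _ k 1]
    rw [sub_sub_cancel]
    
  have hlim : Filter.Tendsto a Filter.atTop (nhds 0) := by
    rw [tendsto_zero_iff_norm_tendsto_zero]
    have h1 : Filter.Tendsto (fun x : ℝ => x ^ (-(s.re - 1))) Filter.atTop (nhds 0) :=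
      tendsto_rpow_neg_atTop (by linarith)
    have h2 : Filter.Tendsto (fun k : ℕ => ((M + k + 1 : ℕ) : ℝ)) Filter.atTop Filter.atTop := by
      refine tendsto_natCast_atTop_atTop.comp ?_
      exact Filter.tendsto_atTop_mono (fun k => (by omega : k ≤ M + k + 1)) Filter.tendsto_id
    refine (h1.comp h2).congr fun k => ?_
    simp only [ha, Function.comp]
    have := Complex.norm_cpow_eq_rpow_re_of_pos
      (x := ((M + k + 1 : ℕ) : ℝ)) (by exact_mod_cast Nat.succ_pos _) (1 - s)
    rw [Complex.ofReal_natCast] at this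
    rw [this]; congr 1; simp
  have hdt : HasSum (fun k : ℕ => (a (k + 1) - a k) / (1 - s)) ((0 - a 0) / (1 - s)) := by
    rw [hd.hasSum_iff_tendsto_nat]
    simp_rw [← sum_div, sum_range_sub]
    exact (hlim.sub_const _).div_const _
  have hsplit : ∑' k : ℕ, ((M + k + 1 : ℕ) : ℂ) ^ (-s) =
      (0 - a 0) / (1 - s) + ∑' k : ℕ, zetaTerm (M + k + 1) s := by
    rw [← hdt.tsum_eq, ← hd.tsum_add ht]
    refine tsum_congr fun k => ?_
    simp only [zetaTerm, ha, ← add_assoc, Nat.add_right_comm _ k 1]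
    ring
  rw [hz, ← hsum.sum_add_tsum_nat_add M, add_assoc]
  congr 1
  have : ∀ k, k + M + 1 = M + k + 1 := fun k => by ring
  simp_rw [this]
  rw [hsplit]
  congr 1
  simp only [ha, add_zero, zero_sub]
  rw [neg_div, ← div_neg, neg_sub]

lemma riemannZeta_eq_sum_add_tsum {s : ℂ} (hs : 0 < s.re) (him : s.im ≠ 0) (M : ℕ) :
    riemannZeta s = ∑ n ∈ range M, ((n + 1 : ℕ) : ℂ) ^ (-s) +
      ((M + 1 : ℕ) : ℂ) ^ (1 - s) / (s - 1) + ∑' k : ℕ, zetaTerm (M + k + 1) s := by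
  set U : Set ℂ := {z | 0 < z.re} ∩ {z | 0 < s.im * z.im}
  have hUo : IsOpen U := (isOpen_lt continuous_const Complex.continuous_re).inter
    (isOpen_lt continuous_const (continuous_const.mul Complex.continuous_im))
  have hUc : Convex ℝ U := by
    refine (convex_halfSpace_re_gt 0).inter ?_
    exact convex_halfSpace_gt (f := fun z : ℂ => s.im * z.im)
      ⟨fun x y => by simp [mul_add], fun c x => by simp; ring⟩ 0
  have hU1 : ∀ z ∈ U, z ≠ 1 := by
    rintro z hz rfl
    simpa using hz.2
  have hd1 : DifferentiableOn ℂ riemannZeta U := fun z hz =>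
    (differentiableAt_riemannZeta (hU1 z hz)).differentiableWithinAt
  have hd2 : DifferentiableOn ℂ (fun s => ∑ n ∈ range M, ((n + 1 : ℕ) : ℂ) ^ (-s) +
      ((M + 1 : ℕ) : ℂ) ^ (1 - s) / (s - 1) + ∑' k : ℕ, zetaTerm (M + k + 1) s) U := by
    refine DifferentiableOn.add (DifferentiableOn.add ?_ ?_)
      ((differentiableOn_tsum_zetaTerm M).mono fun z hz => ⟨hz.1, hU1 z hz⟩)
    · refine DifferentiableOn.fun_sum fun n _ => ?_
      exact DifferentiableOn.const_cpow (by fun_prop) (Or.inl (by exact_mod_cast Nat.succ_ne_zero n))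
    · refine DifferentiableOn.div ?_ (by fun_prop) fun z hz => sub_ne_zero.2 (hU1 z hz)
      exact DifferentiableOn.const_cpow (by fun_prop) (Or.inl (by exact_mod_cast Nat.succ_ne_zero M))
  have hsU : s ∈ U := ⟨hs, mul_self_pos.2 him⟩
  have hsU' : s + 2 ∈ U := ⟨by simp; linarith, by simpa using mul_self_pos.2 him⟩
  refine (hd1.analyticOnNhd hUo).eqOn_of_preconnected_of_eventuallyEq (hd2.analyticOnNhd hUo)
    hUc.isPreconnected hsU' ?_ hsU
  have : {z : ℂ | 1 < z.re} ∈ nhds (s + 2) :=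
    (isOpen_lt continuous_const Complex.continuous_re).mem_nhds (by simp; linarith)
  filter_upwards [this] with z hz
  exact riemannZeta_eq_sum_add_tsum_of_one_lt_re hz M

lemma norm_natCast_cpow_neg_le {s : ℂ} {η : ℝ} (hη : 0 ≤ η) (hs : 1 - η ≤ s.re) {n N : ℕ}
    (hn : 0 < n) (hN : n ≤ N) : ‖(n : ℂ) ^ (-s)‖ ≤ (N : ℝ) ^ η * (n : ℝ)⁻¹ := by
  have hn' : (1 : ℝ) ≤ n := by exact_mod_cast hn
  rw [Complex.norm_natCast_cpow_of_pos hn, Complex.neg_re]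
  calc (n : ℝ) ^ (-s.re) ≤ (n : ℝ) ^ (η + -1) :=
        Real.rpow_le_rpow_of_exponent_le hn' (by linarith)
    _ = (n : ℝ) ^ η * (n : ℝ)⁻¹ := by
        rw [Real.rpow_add (by linarith), Real.rpow_neg_one]
    _ ≤ _ := by gcongr

lemma norm_sum_natCast_cpow_neg_le {s : ℂ} {η : ℝ} (hη : 0 < η) (hs : 1 - η ≤ s.re) (M : ℕ) :
    ‖∑ n ∈ range M, ((n + 1 : ℕ) : ℂ) ^ (-s)‖ ≤
      (1 + 1 / η) * ((M + 1 : ℕ) : ℝ) ^ (2 * η) := by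
  set N : ℝ := ((M + 1 : ℕ) : ℝ) with hN
  have hN1 : 1 ≤ N := by simp [hN]
  have hNη : 1 ≤ N ^ η := Real.one_le_rpow hN1 hη.le
  have hlog : Real.log M ≤ N ^ η / η := by
    refine le_trans ?_ (Real.log_le_rpow_div (by linarith) hη)
    rcases Nat.eq_zero_or_pos M with h | h
    · simp [h]; exact Real.log_nonneg hN1
    · exact Real.log_le_log (by exact_mod_cast h) (by simp [hN])
  have hharm : ∑ n ∈ range M, (((n + 1 : ℕ) : ℝ))⁻¹ ≤ 1 + Real.log M := by
    refine le_trans (le_of_eq ?_) (harmonic_le_one_add_log M)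
    simp [harmonic]
  calc ‖∑ n ∈ range M, ((n + 1 : ℕ) : ℂ) ^ (-s)‖
      ≤ ∑ n ∈ range M, N ^ η * (((n + 1 : ℕ) : ℝ))⁻¹ := by
        refine norm_sum_le_of_le _ fun n hn => ?_
        exact norm_natCast_cpow_neg_le hη.le hs n.succ_pos (by have := mem_range.1 hn; omega)
    _ = N ^ η * ∑ n ∈ range M, (((n + 1 : ℕ) : ℝ))⁻¹ := by rw [mul_sum]
    _ ≤ N ^ η * (1 + N ^ η / η) := by gcongr; linarith
    _ ≤ N ^ η * (N ^ η + N ^ η / η) := by gcongr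
    _ = (1 + 1 / η) * N ^ (2 * η) := by
        rw [two_mul, Real.rpow_add (by linarith)]; ring

lemma norm_tsum_zetaTerm_le {s : ℂ} {η : ℝ} (hη : η ≤ 1 / 2) (hs : 1 - η ≤ s.re) (hs1 : s ≠ 1)
    (M : ℕ) :
    ‖∑' k : ℕ, zetaTerm (M + k + 1) s‖ ≤
      ‖s‖ * ((M + 1 : ℕ) : ℝ) ^ (η - 1 / 2) * ∑' n : ℕ, (n : ℝ) ^ (-(3 / 2) : ℝ) := by
  have hS : Summable fun n : ℕ => (n : ℝ) ^ (-(3 / 2) : ℝ) :=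
    Real.summable_nat_rpow.2 (by norm_num)
  have hS' : Summable fun k : ℕ => ((k + (M + 1) : ℕ) : ℝ) ^ (-(3 / 2) : ℝ) :=
    (summable_nat_add_iff (M + 1)).2 hS
  have hle : ∑' k : ℕ, ((k + (M + 1) : ℕ) : ℝ) ^ (-(3 / 2) : ℝ) ≤
      ∑' n : ℕ, (n : ℝ) ^ (-(3 / 2) : ℝ) := by
    rw [← hS.sum_add_tsum_nat_add (M + 1)]
    exact le_add_of_nonneg_left (sum_nonneg fun _ _ => by positivity)
  have hb : ∀ k : ℕ, ‖zetaTerm (M + k + 1) s‖ ≤ ‖s‖ * ((M + 1 : ℕ) : ℝ) ^ (η - 1 / 2) *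
      ((k + (M + 1) : ℕ) : ℝ) ^ (-(3 / 2) : ℝ) := by
    intro k
    have e : k + (M + 1) = M + k + 1 := by ring
    rw [e]
    have hpos : (1 : ℝ) ≤ ((M + k + 1 : ℕ) : ℝ) := by exact_mod_cast (by omega)
    refine (norm_zetaTerm_le (by linarith) hs1 (by omega)).trans ?_
    rw [mul_assoc]
    gcongr
    calc ((M + k + 1 : ℕ) : ℝ) ^ (-s.re - 1) ≤ ((M + k + 1 : ℕ) : ℝ) ^ ((η - 1 / 2) + -(3 / 2)) :=
          Real.rpow_le_rpow_of_exponent_le hpos (by linarith)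
      _ = ((M + k + 1 : ℕ) : ℝ) ^ (η - 1 / 2) * ((M + k + 1 : ℕ) : ℝ) ^ (-(3 / 2) : ℝ) :=
          Real.rpow_add (by linarith) _ _
      _ ≤ _ := by
          gcongr ?_ * _
          refine Real.rpow_le_rpow_of_nonpos (by positivity) ?_ (by linarith)
          exact_mod_cast (by omega)
  refine (tsum_of_norm_bounded (hS'.mul_left _).hasSum hb).trans ?_
  rw [tsum_mul_left]
  gcongr

/-- Near the line `Re s = 1` the zeta function grows at most like `|Im s| ^ (1 / 16)`. -/
lemma exists_norm_riemannZeta_le : ∃ C : ℝ, 0 < C ∧ ∀ s : ℂ, 63 / 64 ≤ s.re → s.re ≤ 5 →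
    1 / 2 ≤ |s.im| → ‖riemannZeta s‖ ≤ C * |s.im| ^ (1 / 16 : ℝ) := by
  set S : ℝ := ∑' n : ℕ, (n : ℝ) ^ (-(3 / 2) : ℝ)
  have hS0 : 0 ≤ S := tsum_nonneg fun _ => by positivity
  refine ⟨(65 + 2 + 6 * S) * 8 ^ (1 / 32 : ℝ), by positivity, fun s h1 h2 h3 => ?_⟩
  set τ := |s.im|
  have him : s.im ≠ 0 := by intro h; simp [τ, h] at h3; linarith
  have hs1 : s ≠ 1 := by rintro rfl; simp at him
  set M := ⌊4 * τ ^ 2⌋₊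
  set N : ℝ := ((M + 1 : ℕ) : ℝ) with hN
  have hNlow : 4 * τ ^ 2 ≤ N := by
    simpa [hN] using (Nat.lt_floor_add_one (4 * τ ^ 2)).le
  have hNup : N ≤ 8 * τ ^ 2 := by
    have : (M : ℝ) ≤ 4 * τ ^ 2 := Nat.floor_le (by positivity)
    simp only [hN]; push_cast; nlinarith
  have hN1 : 1 ≤ N := by simp [hN]
  have hA := norm_sum_natCast_cpow_neg_le (s := s) (η := 1 / 64) (by norm_num) (by linarith) M
  have hB : ‖((M + 1 : ℕ) : ℂ) ^ (1 - s) / (s - 1)‖ ≤ 2 * N ^ (1 / 32 : ℝ) := by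
    rw [norm_div, Complex.norm_natCast_cpow_of_pos M.succ_pos]
    have : 1 / 2 ≤ ‖s - 1‖ := h3.trans (by simpa using Complex.abs_im_le_norm (s - 1))
    rw [div_le_iff₀ (by linarith)]
    have h4 : N ^ (1 - s).re ≤ N ^ (1 / 32 : ℝ) :=
      Real.rpow_le_rpow_of_exponent_le hN1 (by simp; linarith)
    have : 0 ≤ N ^ (1 / 32 : ℝ) := by positivity
    calc N ^ (1 - s).re ≤ N ^ (1 / 32 : ℝ) := h4
      _ ≤ _ := by nlinarith
  have hC := norm_tsum_zetaTerm_le (s := s) (η := 1 / 64) (by norm_num) (by linarith) hs1 M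
  have hsn : ‖s‖ ≤ 6 * N ^ (1 / 2 : ℝ) := by
    have h5 : ‖s‖ ≤ 11 * τ := by
      refine (Complex.norm_le_abs_re_add_abs_im s).trans ?_
      rw [abs_of_nonneg (by linarith : 0 ≤ s.re)]
      change s.re + τ ≤ _
      linarith
    have h6 : 2 * τ ≤ N ^ (1 / 2 : ℝ) := by
      rw [← Real.sqrt_eq_rpow]
      exact Real.le_sqrt_of_sq_le (by nlinarith)
    linarith [abs_nonneg s.im]
  have hC' : ‖∑' k : ℕ, zetaTerm (M + k + 1) s‖ ≤ 6 * S * N ^ (1 / 32 : ℝ) := by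
    refine hC.trans ?_
    calc ‖s‖ * N ^ (1 / 64 - 1 / 2 : ℝ) * S
        ≤ (6 * N ^ (1 / 2 : ℝ)) * N ^ (1 / 64 - 1 / 2 : ℝ) * S := by gcongr
      _ = 6 * S * N ^ (1 / 64 : ℝ) := by
          rw [mul_assoc 6, ← Real.rpow_add (by linarith)]; norm_num; ring
      _ ≤ _ := by
          gcongr 6 * S * ?_
          exact Real.rpow_le_rpow_of_exponent_le hN1 (by norm_num)
  have hfin : N ^ (1 / 32 : ℝ) ≤ 8 ^ (1 / 32 : ℝ) * τ ^ (1 / 16 : ℝ) := by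
    calc N ^ (1 / 32 : ℝ) ≤ (8 * τ ^ 2) ^ (1 / 32 : ℝ) := by gcongr
      _ = _ := by
        rw [Real.mul_rpow (by norm_num) (by positivity), ← Real.rpow_natCast,
          ← Real.rpow_mul (abs_nonneg s.im)]
        norm_num [τ]
  rw [riemannZeta_eq_sum_add_tsum (by linarith) him M]
  refine (norm_add₃_le).trans ?_
  have e1 : (1 + 1 / (1 / 64 : ℝ)) = 65 := by norm_num
  have e2 : (2 * (1 / 64 : ℝ)) = 1 / 32 := by norm_num
  rw [e1, e2] at hA
  calc _ ≤ 65 * N ^ (1 / 32 : ℝ) + 2 * N ^ (1 / 32 : ℝ) + 6 * S * N ^ (1 / 32 : ℝ) := by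
        gcongr
    _ = (65 + 2 + 6 * S) * N ^ (1 / 32 : ℝ) := by ring
    _ ≤ (65 + 2 + 6 * S) * (8 ^ (1 / 32 : ℝ) * τ ^ (1 / 16 : ℝ)) := by gcongr
    _ = _ := by ring

lemma exists_norm_deriv_riemannZeta_le : ∃ C : ℝ, 0 < C ∧ ∀ s : ℂ, 127 / 128 ≤ s.re → s.re ≤ 4 →
    1 ≤ |s.im| → ‖deriv riemannZeta s‖ ≤ C * |s.im| ^ (1 / 16 : ℝ) := by
  obtain ⟨C, hC, hb⟩ := exists_norm_riemannZeta_le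
  refine ⟨C * 2 ^ (1 / 16 : ℝ) / (1 / 128), by positivity, fun s h1 h2 h3 => ?_⟩
  have hz : ∀ z ∈ Metric.closedBall s (1 / 128), 63 / 64 ≤ z.re ∧ z.re ≤ 5 ∧ 1 / 2 ≤ |z.im| ∧
      |z.im| ≤ 2 * |s.im| := by
    intro z hz
    rw [mem_closedBall_iff_norm] at hz
    have hre := abs_le.1 ((Complex.abs_re_le_norm (z - s)).trans hz)
    have him := (Complex.abs_im_le_norm (z - s)).trans hz
    rw [Complex.sub_re] at hre
    rw [Complex.sub_im] at him
    have t1 := abs_sub_abs_le_abs_sub z.im s.im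
    have t2 := abs_sub_abs_le_abs_sub s.im z.im
    rw [abs_sub_comm] at t2
    refine ⟨?_, ?_, ?_, ?_⟩ <;> linarith [hre.1, hre.2]
  have hd : DiffContOnCl ℂ riemannZeta (Metric.ball s (1 / 128)) := by
    refine DifferentiableOn.diffContOnCl fun z hzz => ?_
    refine (differentiableAt_riemannZeta ?_).differentiableWithinAt
    rintro rfl
    have := (hz 1 (Metric.closure_ball_subset_closedBall hzz)).2.2.1
    norm_num at this
  have := Complex.norm_deriv_le_of_forall_mem_sphere_norm_le (C := C * (2 * |s.im|) ^ (1 / 16 : ℝ))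
    (by norm_num) hd fun z hzz => by
      obtain ⟨a, b, c, d⟩ := hz z (Metric.sphere_subset_closedBall hzz)
      refine (hb z a b c).trans ?_
      gcongr
  refine this.trans (le_of_eq ?_)
  rw [Real.mul_rpow (by norm_num) (abs_nonneg _)]
  ring

lemma exists_norm_riemannZeta_one_add_le : ∃ A : ℝ, 0 < A ∧ ∀ x : ℝ, 0 < x → x ≤ 2 →
    ‖riemannZeta (1 + x)‖ ≤ A / x := by
  have hc : ContinuousOn (fun x : ℝ => riemannZeta₁ (1 + x)) (Set.Icc 0 2) :=
    (differentiable_riemannZeta₁.continuous.comp (by fun_prop)).continuousOn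
  obtain ⟨A, hA⟩ := isCompact_Icc.exists_bound_of_continuousOn hc
  refine ⟨|A| + 1, by positivity, fun x hx hx2 => ?_⟩
  have hx0 : (x : ℂ) ≠ 0 := by exact_mod_cast hx.ne'
  rw [riemannZeta_eq_inv_sub_mul (by simpa using hx0), norm_mul, norm_inv, add_sub_cancel_left,
    Complex.norm_real, Real.norm_eq_abs, abs_of_pos hx, div_eq_inv_mul]
  gcongr
  exact (hA x ⟨hx.le, hx2⟩).trans ((le_abs_self A).trans (by linarith))

lemma one_le_norm_riemannZeta_product {x : ℝ} (hx : 0 < x) (y : ℝ) :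
    1 ≤ ‖riemannZeta (1 + x)‖ ^ 3 * ‖riemannZeta (1 + x + Complex.I * y)‖ ^ 4 *
      ‖riemannZeta (1 + x + 2 * Complex.I * y)‖ := by
  simpa [DirichletCharacter.LFunctionTrivChar, DirichletCharacter.LFunction_modOne_eq] using
    DirichletCharacter.norm_LFunction_product_ge_one (1 : DirichletCharacter ℂ 1) hx y

/-- Lower bound for the zeta function to the right of the line `Re s = 1`. -/
lemma exists_le_norm_riemannZeta_pow_four : ∃ B : ℝ, 0 < B ∧ ∀ s : ℂ, 1 < s.re → s.re ≤ 3 →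
    1 ≤ |s.im| → (s.re - 1) ^ 3 ≤ B * |s.im| ^ (1 / 16 : ℝ) * ‖riemannZeta s‖ ^ 4 := by
  obtain ⟨A, hA, hA'⟩ := exists_norm_riemannZeta_one_add_le
  obtain ⟨C, hC, hC'⟩ := exists_norm_riemannZeta_le
  refine ⟨A ^ 3 * (C * 2 ^ (1 / 16 : ℝ)), by positivity, fun s h1 h2 h3 => ?_⟩
  have hx : 0 < s.re - 1 := by linarith
  have key := one_le_norm_riemannZeta_product hx s.im
  have e1 : (1 : ℂ) + ((s.re - 1 : ℝ) : ℂ) + Complex.I * s.im = s := by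
    apply Complex.ext <;> simp
  have e2 : ‖riemannZeta (1 + ((s.re - 1 : ℝ) : ℂ) + 2 * Complex.I * s.im)‖ ≤
      C * (2 ^ (1 / 16 : ℝ) * |s.im| ^ (1 / 16 : ℝ)) := by
    rw [← Real.mul_rpow (by norm_num) (abs_nonneg _)]
    have him : (1 + ((s.re - 1 : ℝ) : ℂ) + 2 * Complex.I * s.im).im = 2 * s.im := by simp
    have hre : (1 + ((s.re - 1 : ℝ) : ℂ) + 2 * Complex.I * s.im).re = s.re := by simp
    have := hC' (1 + ((s.re - 1 : ℝ) : ℂ) + 2 * Complex.I * s.im) (by rw [hre]; linarith)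
      (by rw [hre]; linarith) (by rw [him, abs_mul, abs_two]; linarith)
    rwa [him, abs_mul, abs_two] at this
  rw [e1] at key
  have e3 := hA' (s.re - 1) hx (by linarith)
  have : 1 ≤ (A / (s.re - 1)) ^ 3 * ‖riemannZeta s‖ ^ 4 *
      (C * (2 ^ (1 / 16 : ℝ) * |s.im| ^ (1 / 16 : ℝ))) := by
    refine key.trans ?_
    gcongr
  rw [div_pow] at this
  have h4 : 0 < (s.re - 1) ^ 3 := by positivity
  calc (s.re - 1) ^ 3 = (s.re - 1) ^ 3 * 1 := by ring
    _ ≤ (s.re - 1) ^ 3 * (A ^ 3 / (s.re - 1) ^ 3 * ‖riemannZeta s‖ ^ 4 *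
      (C * (2 ^ (1 / 16 : ℝ) * |s.im| ^ (1 / 16 : ℝ)))) := by gcongr
    _ = _ := by field_simp

/-- A zero-free region for the zeta function together with a lower bound there. -/
lemma exists_le_norm_riemannZeta : ∃ c m : ℝ, 0 < c ∧ c ≤ 1 / 128 ∧ 0 < m ∧ ∀ s : ℂ,
    1 ≤ |s.im| → 1 - c / (|s.im| ^ (1 / 16 : ℝ)) ^ 5 ≤ s.re → s.re ≤ 3 →
    m / (|s.im| ^ (1 / 16 : ℝ)) ^ 4 ≤ ‖riemannZeta s‖ := by
  obtain ⟨B, hB, hB'⟩ := exists_le_norm_riemannZeta_pow_four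
  obtain ⟨C, hC, hC'⟩ := exists_norm_deriv_riemannZeta_le
  set b : ℝ := 1 / (B + 1)
  have hb : 0 < b := by positivity
  have hb1 : b ≤ 1 := by
    rw [div_le_one (by positivity)]; linarith
  have hb4 : b ^ 4 * B ≤ 1 := by
    have h1 : b * (B + 1) = 1 := by simp only [b]; field_simp
    have h2 : b ^ 4 ≤ b := pow_le_of_le_one hb.le hb1 (by norm_num)
    nlinarith
  set e : ℝ := min (1 / 128) (b / (4 * C))
  have he : 0 < e := by positivity
  have he1 : e ≤ 1 / 128 := min_le_left _ _
  have he2 : 4 * C * e ≤ b := by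
    have : e ≤ b / (4 * C) := min_le_right _ _
    rw [le_div_iff₀ (by positivity)] at this; linarith
  have he4 : e ^ 4 ≤ 1 / 128 := (pow_le_of_le_one he.le (by linarith) (by norm_num)).trans he1
  refine ⟨e ^ 4, b * e ^ 3 / 2, by positivity, he4, by positivity, fun s h1 h2 h3 => ?_⟩
  set T : ℝ := |s.im| ^ (1 / 16 : ℝ) with hT
  have hT1 : 1 ≤ T := Real.one_le_rpow h1 (by norm_num)
  set h : ℝ := e ^ 4 / T ^ 5 with hh
  have hh0 : 0 < h := by positivity
  have hh1 : h ≤ 1 / 128 := (div_le_self (by positivity) (one_le_pow₀ hT1)).trans he4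
  have right : ∀ z : ℂ, z.im = s.im → 1 + h ≤ z.re → z.re ≤ 3 →
      b * e ^ 3 / T ^ 4 ≤ ‖riemannZeta z‖ := by
    intro z hz hz1 hz2
    have := hB' z (by linarith) hz2 (by rwa [hz])
    rw [hz, ← hT] at this
    have h4 : h ^ 3 ≤ B * T * ‖riemannZeta z‖ ^ 4 := by
      refine le_trans ?_ this
      gcongr
      linarith
    rw [← pow_le_pow_iff_left₀ (by positivity) (norm_nonneg _) (n := 4) (by norm_num)]
    have h5 : B * T * (b * e ^ 3 / T ^ 4) ^ 4 ≤ B * T * ‖riemannZeta z‖ ^ 4 := by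
      refine le_trans ?_ h4
      have : B * T * (b * e ^ 3 / T ^ 4) ^ 4 = (b ^ 4 * B) * h ^ 3 := by
        rw [hh]; field_simp
      rw [this]
      exact mul_le_of_le_one_left (by positivity) hb4
    exact le_of_mul_le_mul_left h5 (by positivity)
  by_cases hre : 1 + h ≤ s.re
  · refine le_trans ?_ (right s rfl hre h3)
    gcongr
    linarith [show 0 < b * e ^ 3 by positivity]
  · push Not at hre
    set z : ℂ := ⟨1 + h, s.im⟩
    have hz := right z rfl le_rfl (by change 1 + h ≤ 3; linarith)
    have hconv : Convex ℝ {w : ℂ | w.im = s.im ∧ 127 / 128 ≤ w.re ∧ w.re ≤ 4} := by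
      rw [show {w : ℂ | w.im = s.im ∧ 127 / 128 ≤ w.re ∧ w.re ≤ 4} =
          Complex.imLm ⁻¹' {s.im} ∩ Complex.reLm ⁻¹' Set.Icc (127 / 128) 4 from rfl]
      exact ((convex_singleton _).linear_preimage _).inter ((convex_Icc _ _).linear_preimage _)
    have hdiff : ‖riemannZeta z - riemannZeta s‖ ≤ C * T * ‖z - s‖ := by
      refine hconv.norm_image_sub_le_of_norm_deriv_le (𝕜 := ℂ) (fun w hw => ?_)
        (fun w hw => ?_) ⟨rfl, ?_, ?_⟩ ⟨rfl, ?_, ?_⟩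
      · refine differentiableAt_riemannZeta ?_
        rintro rfl
        rw [← hw.1] at h1
        norm_num at h1
      · have := hC' w hw.2.1 hw.2.2 (by rwa [hw.1])
        rwa [hw.1] at this
      · linarith
      · linarith
      · change 127 / 128 ≤ 1 + h
        linarith
      · change 1 + h ≤ 4
        linarith
    have hzs : ‖z - s‖ ≤ 2 * h := by
      have : z - s = ((1 + h - s.re : ℝ) : ℂ) := by apply Complex.ext <;> simp [z]
      rw [this, Complex.norm_real, Real.norm_eq_abs, abs_le]
      constructor <;> linarith
    have h6 : C * T * ‖z - s‖ ≤ b * e ^ 3 / 2 / T ^ 4 := by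
      calc C * T * ‖z - s‖ ≤ C * T * (2 * h) := by gcongr
        _ = (4 * C * e) * e ^ 3 / 2 / T ^ 4 := by rw [hh]; field_simp; ring
        _ ≤ _ := by gcongr
    have h7 : b * e ^ 3 / T ^ 4 = b * e ^ 3 / 2 / T ^ 4 + b * e ^ 3 / 2 / T ^ 4 := by ring
    have h8 := norm_sub_norm_le (riemannZeta z) (riemannZeta s)
    linarith

/-- The analytic continuation of `-ζ'(s) / (s ζ(s)) - 1 / (s - 1)`. -/
noncomputable def psiTransform (s : ℂ) : ℂ := -(deriv riemannZeta₁ s / riemannZeta₁ s + 1) / s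

lemma riemannZeta₁_eq {s : ℂ} (hs : s ≠ 1) : riemannZeta₁ s = (s - 1) * riemannZeta s := by
  rw [riemannZeta_eq_inv_sub_mul hs, mul_inv_cancel_left₀ (sub_ne_zero.2 hs)]

lemma deriv_riemannZeta₁_eq {s : ℂ} (hs : s ≠ 1) :
    deriv riemannZeta₁ s = riemannZeta s + (s - 1) * deriv riemannZeta s := by
  have h : riemannZeta₁ =ᶠ[nhds s] fun z => (z - 1) * riemannZeta z := by
    filter_upwards [isOpen_ne.mem_nhds hs] with z hz using riemannZeta₁_eq hz
  rw [h.deriv_eq]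
  have := ((hasDerivAt_id s).sub_const 1).fun_mul (differentiableAt_riemannZeta hs).hasDerivAt
  simpa using this.deriv

lemma psiTransform_eq {s : ℂ} (hs : s ≠ 1) (hs0 : s ≠ 0) (hz : riemannZeta s ≠ 0) :
    psiTransform s = -deriv riemannZeta s / riemannZeta s / s - 1 / (s - 1) := by
  have := sub_ne_zero.2 hs
  rw [psiTransform, deriv_riemannZeta₁_eq hs, riemannZeta₁_eq hs]
  field_simp
  ring

lemma analyticAt_psiTransform {s : ℂ} (hs0 : s ≠ 0) (hz : riemannZeta₁ s ≠ 0) :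
    AnalyticAt ℂ psiTransform s := by
  have h : AnalyticAt ℂ riemannZeta₁ s := differentiable_riemannZeta₁.analyticAt s
  exact (((h.deriv.div h hz).add analyticAt_const).neg).div analyticAt_id hs0

lemma riemannZeta₁_ne_zero_of_one_le_re {s : ℂ} (hs : 1 ≤ s.re) : riemannZeta₁ s ≠ 0 := by
  by_cases h : s = 1
  · simp [h]
  · rw [riemannZeta₁_eq h]
    exact mul_ne_zero (sub_ne_zero.2 h) (riemannZeta_ne_zero_of_one_le_re hs)

lemma exists_norm_psiTransform_le : ∃ c K : ℝ, 0 < c ∧ c ≤ 1 / 128 ∧ 0 < K ∧ ∀ s : ℂ,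
    1 ≤ |s.im| → 1 - c / (|s.im| ^ (1 / 16 : ℝ)) ^ 5 ≤ s.re → s.re ≤ 3 →
    riemannZeta s ≠ 0 ∧ ‖psiTransform s‖ ≤ K * (|s.im| ^ (1 / 16 : ℝ)) ^ 5 / |s.im| := by
  obtain ⟨c, m, hc, hc1, hm, hlow⟩ := exists_le_norm_riemannZeta
  obtain ⟨C, hC, hC'⟩ := exists_norm_deriv_riemannZeta_le
  refine ⟨c, C / m + 1, hc, hc1, by positivity, fun s h1 h2 h3 => ?_⟩
  set T : ℝ := |s.im| ^ (1 / 16 : ℝ) with hT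
  have hT1 : 1 ≤ T := Real.one_le_rpow h1 (by norm_num)
  have hz := hlow s h1 h2 h3
  have hz0 : 0 < ‖riemannZeta s‖ := lt_of_lt_of_le (by positivity) hz
  have hs1 : s ≠ 1 := by rintro rfl; norm_num at h1
  have hs0 : s ≠ 0 := by rintro rfl; norm_num at h1
  have hre : 127 / 128 ≤ s.re := by
    have : c / T ^ 5 ≤ 1 / 128 := (div_le_self hc.le (one_le_pow₀ hT1)).trans hc1
    linarith
  have hd := hC' s hre (by linarith) h1
  rw [← hT] at hd
  refine ⟨norm_pos_iff.1 hz0, ?_⟩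
  rw [psiTransform_eq hs1 hs0 (norm_pos_iff.1 hz0)]
  have n1 : |s.im| ≤ ‖s‖ := Complex.abs_im_le_norm s
  have n2 : |s.im| ≤ ‖s - 1‖ := by simpa using Complex.abs_im_le_norm (s - 1)
  have him : 0 < |s.im| := by linarith
  calc ‖-deriv riemannZeta s / riemannZeta s / s - 1 / (s - 1)‖
      ≤ ‖deriv riemannZeta s‖ / ‖riemannZeta s‖ / ‖s‖ + 1 / ‖s - 1‖ := by
        refine (norm_sub_le _ _).trans (le_of_eq ?_)
        simp only [norm_div, norm_neg, norm_one]
    _ ≤ (C * T) / (m / T ^ 4) / |s.im| + T ^ 5 / |s.im| := by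
        gcongr
        exact one_le_pow₀ hT1
    _ = _ := by field_simp

lemma exists_norm_iteratedDeriv_psiTransform_le_of_two_le : ∃ C : ℝ, ∀ s : ℂ, 1 ≤ s.re →
    s.re ≤ 2 → 2 ≤ |s.im| → ‖iteratedDeriv 2 psiTransform s‖ ≤ C := by
  obtain ⟨c, K, hc, hc1, hK, hb⟩ := exists_norm_psiTransform_le
  refine ⟨2 * (K * 64) * (32 / c) ^ 2, fun s h1 h2 h3 => ?_⟩
  set τ : ℝ := |s.im|
  set T : ℝ := τ ^ (1 / 16 : ℝ) with hT
  have hT1 : 1 ≤ T := Real.one_le_rpow (by linarith) (by norm_num)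
  set R : ℝ := c / (32 * T ^ 5) with hR
  have hR0 : 0 < R := by positivity
  have hR1 : R ≤ 1 / 128 := by
    refine (div_le_self hc.le ?_).trans hc1
    linarith [one_le_pow₀ hT1 (n := 5)]
  have hz : ∀ z ∈ Metric.closedBall s R, riemannZeta z ≠ 0 ∧ z ≠ 1 ∧ z ≠ 0 ∧
      ‖psiTransform z‖ ≤ K * 64 * T ^ 5 / τ := by
    intro z hz
    rw [mem_closedBall_iff_norm] at hz
    have hre := abs_le.1 ((Complex.abs_re_le_norm (z - s)).trans hz)
    have him := (Complex.abs_im_le_norm (z - s)).trans hz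
    rw [Complex.sub_re] at hre
    rw [Complex.sub_im] at him
    have t1 := abs_sub_abs_le_abs_sub z.im s.im
    have t2 := abs_sub_abs_le_abs_sub s.im z.im
    rw [abs_sub_comm] at t2
    have u1 : τ / 2 ≤ |z.im| := by change _ - |s.im| ≤ _ at t1; linarith
    have u2 : |z.im| ≤ 2 * τ := by change _ - |s.im| ≤ _ at t1; linarith
    have u3 : 1 ≤ |z.im| := by linarith
    have hTz : |z.im| ^ (1 / 16 : ℝ) ≤ 2 * T := by
      calc |z.im| ^ (1 / 16 : ℝ) ≤ (2 * τ) ^ (1 / 16 : ℝ) := by gcongr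
        _ = 2 ^ (1 / 16 : ℝ) * T := Real.mul_rpow (by norm_num) (by positivity)
        _ ≤ 2 ^ (1 : ℝ) * T := by gcongr <;> norm_num
        _ = 2 * T := by norm_num
    have hTz5 : (|z.im| ^ (1 / 16 : ℝ)) ^ 5 ≤ 32 * T ^ 5 := by
      calc (|z.im| ^ (1 / 16 : ℝ)) ^ 5 ≤ (2 * T) ^ 5 := by gcongr
        _ = _ := by ring
    have hTz0 : 0 < |z.im| ^ (1 / 16 : ℝ) := Real.rpow_pos_of_pos (by linarith) _
    have hRz : R ≤ c / (|z.im| ^ (1 / 16 : ℝ)) ^ 5 := by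
      rw [hR]; gcongr
    obtain ⟨v1, v2⟩ := hb z u3 (by linarith) (by linarith)
    refine ⟨v1, ?_, ?_, ?_⟩
    · rintro rfl; norm_num at u3
    · rintro rfl; norm_num at u3
    · refine v2.trans ?_
      calc K * (|z.im| ^ (1 / 16 : ℝ)) ^ 5 / |z.im| ≤ K * (32 * T ^ 5) / (τ / 2) := by gcongr
        _ = _ := by ring
  have hd : DiffContOnCl ℂ psiTransform (Metric.ball s R) := by
    refine DifferentiableOn.diffContOnCl fun z hzz => ?_
    obtain ⟨v1, v2, v3, -⟩ := hz z (Metric.closure_ball_subset_closedBall hzz)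
    refine (analyticAt_psiTransform v3 ?_).differentiableAt.differentiableWithinAt
    rw [riemannZeta₁_eq v2]
    exact mul_ne_zero (sub_ne_zero.2 v2) v1
  have key := Complex.norm_iteratedDeriv_le_of_forall_mem_sphere_norm_le 2 hR0 hd
    fun z hzz => (hz z (Metric.sphere_subset_closedBall hzz)).2.2.2
  refine key.trans ?_
  have hτ : T ^ 15 ≤ τ := by
    calc T ^ 15 ≤ T ^ 16 := pow_le_pow_right₀ hT1 (by norm_num)
      _ = τ := by
        rw [hT, ← Real.rpow_natCast, ← Real.rpow_mul (abs_nonneg _)]; norm_num [τ]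
  have : ((2 : ℕ).factorial : ℝ) * (K * 64 * T ^ 5 / τ) / R ^ 2 =
      2 * (K * 64) * (32 / c) ^ 2 * (T ^ 15 / τ) := by
    rw [hR]; norm_num [Nat.factorial]; field_simp
  rw [this]
  refine mul_le_of_le_one_right (by positivity) ?_
  rw [div_le_one (by linarith)]
  exact hτ

/-- The second derivative of `psiTransform` is bounded on the strip `1 ≤ Re s ≤ 2`. -/
lemma exists_norm_iteratedDeriv_psiTransform_le : ∃ C : ℝ, ∀ s : ℂ, 1 ≤ s.re →
    s.re ≤ 2 → ‖iteratedDeriv 2 psiTransform s‖ ≤ C := by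
  obtain ⟨C₁, hC₁⟩ := exists_norm_iteratedDeriv_psiTransform_le_of_two_le
  have hcpt : IsCompact (Set.Icc (1 : ℝ) 2 ×ℂ Set.Icc (-2 : ℝ) 2) :=
    isCompact_Icc.reProdIm isCompact_Icc
  have hcont : ContinuousOn (iteratedDeriv 2 psiTransform)
      (Set.Icc (1 : ℝ) 2 ×ℂ Set.Icc (-2 : ℝ) 2) := by
    intro z hz
    have h1 : 1 ≤ z.re := hz.1.1
    have hz0 : z ≠ 0 := by rintro rfl; norm_num at h1
    have := analyticAt_psiTransform hz0 (riemannZeta₁_ne_zero_of_one_le_re h1)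
    rw [iteratedDeriv_eq_iterate]
    exact this.deriv.deriv.continuousAt.continuousWithinAt
  obtain ⟨C₂, hC₂⟩ := hcpt.exists_bound_of_continuousOn hcont
  refine ⟨max C₁ C₂, fun s h1 h2 => ?_⟩
  rcases le_total 2 |s.im| with h | h
  · exact (hC₁ s h1 h2 h).trans (le_max_left _ _)
  · exact (hC₂ s ⟨⟨h1, h2⟩, abs_le.1 h⟩).trans (le_max_right _ _)

/-- The error term `ψ(u) - u` for `u > 1`, extended by zero. -/
noncomputable def psiError : ℝ → ℂ :=
  (Set.Ioi (1 : ℝ)).indicator fun u => ((Chebyshev.psi u - u : ℝ) : ℂ)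

lemma abs_psi_sub_self_le {u : ℝ} (hu : 0 ≤ u) :
    |Chebyshev.psi u - u| ≤ (Real.log 4 + 4) * u := by
  have h1 := Chebyshev.psi_le_const_mul_self hu
  have h2 := Chebyshev.psi_nonneg u
  have h3 : 0 ≤ Real.log 4 := Real.log_nonneg (by norm_num)
  rw [abs_le]
  constructor <;> nlinarith

lemma locallyIntegrable_psi_sub_self :
    MeasureTheory.LocallyIntegrable (fun u : ℝ => Chebyshev.psi u - u) :=
  Chebyshev.psi_mono.locallyIntegrable.sub continuous_id.locallyIntegrable

lemma locallyIntegrable_psiError : MeasureTheory.LocallyIntegrable psiError := by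
  have : MeasureTheory.LocallyIntegrable (fun u : ℝ => ((Chebyshev.psi u - u : ℝ) : ℂ)) := by
    intro x
    obtain ⟨t, ht, hi⟩ := locallyIntegrable_psi_sub_self x
    exact ⟨t, ht, hi.ofReal⟩
  exact this.indicator measurableSet_Ioi

lemma psiError_isBigO_atTop : psiError =O[Filter.atTop] fun u : ℝ => u ^ (-(-1 : ℝ)) := by
  refine Asymptotics.IsBigO.of_bound (Real.log 4 + 4) ?_
  filter_upwards [Filter.eventually_gt_atTop 1] with u hu
  rw [psiError, Set.indicator_of_mem (show u ∈ Set.Ioi 1 from hu), neg_neg, Real.rpow_one,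
    Complex.norm_real, Real.norm_eq_abs, Real.norm_eq_abs, abs_of_pos (show 0 < u by linarith)]
  exact abs_psi_sub_self_le (by linarith)

lemma psiError_eventually_eq_zero : psiError =ᶠ[nhdsWithin 0 (Set.Ioi 0)] 0 := by
  have : Set.Iio (1 : ℝ) ∈ nhdsWithin (0 : ℝ) (Set.Ioi 0) :=
    mem_nhdsWithin_of_mem_nhds (Iio_mem_nhds one_pos)
  filter_upwards [this] with u hu
  rw [psiError, Set.indicator_of_notMem (by simpa using (show u < 1 from hu).le)]
  rfl

lemma mellinConvergent_psiError {s : ℂ} (hs : 1 < s.re) : MellinConvergent psiError (-s) := by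
  refine mellinConvergent_of_isBigO_rpow (a := -1) (b := -s.re - 1)
    (locallyIntegrable_psiError.locallyIntegrableOn _) psiError_isBigO_atTop
    (by simpa using hs) ?_ (by simp)
  exact psiError_eventually_eq_zero.trans_isBigO (Asymptotics.isBigO_zero _ _)

lemma vonMangoldt_LSeries_eq_integral {s : ℂ} (hs : 1 < s.re) :
    -deriv riemannZeta s / riemannZeta s =
      s * ∫ t in Set.Ioi (1 : ℝ), (Chebyshev.psi t : ℂ) * (t : ℂ) ^ (-(s + 1)) := by
  rw [← ArithmeticFunction.LSeries_vonMangoldt_eq_deriv_riemannZeta_div hs]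
  have hO : (fun n : ℕ => ∑ k ∈ Icc 1 n, ArithmeticFunction.vonMangoldt k) =O[Filter.atTop]
      fun n : ℕ => (n : ℝ) ^ (1 : ℝ) := by
    refine Asymptotics.IsBigO.of_bound (Real.log 4 + 4) (Filter.Eventually.of_forall fun n => ?_)
    have h : ∑ k ∈ Icc 1 n, ArithmeticFunction.vonMangoldt k = Chebyshev.psi n := by
      simp [Chebyshev.psi]; rfl
    rw [h, Real.rpow_one, Real.norm_of_nonneg (Chebyshev.psi_nonneg _),
      Real.norm_of_nonneg (Nat.cast_nonneg _)]
    exact Chebyshev.psi_le_const_mul_self (Nat.cast_nonneg _)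
  rw [LSeries_eq_mul_integral_of_nonneg _ zero_le_one hs hO
    fun n => ArithmeticFunction.vonMangoldt_nonneg]
  congr 1
  refine MeasureTheory.setIntegral_congr_fun measurableSet_Ioi fun t _ => ?_
  simp only [Chebyshev.psi, Complex.ofReal_sum]
  rfl

lemma mellin_psiError_eq {s : ℂ} (hs : 1 < s.re) : mellin psiError (-s) = psiTransform s := by
  have hs1 : s ≠ 1 := by rintro rfl; simp at hs
  have hs0 : s ≠ 0 := by rintro rfl; simp at hs; linarith
  have h1s := sub_ne_zero.2 hs1
  have hind : ∀ t : ℝ, (t : ℂ) ^ (-s - 1) • psiError t = (Set.Ioi (1 : ℝ)).indicator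
      (fun t : ℝ => ((Chebyshev.psi t - t : ℝ) : ℂ) * (t : ℂ) ^ (-(s + 1))) t := by
    intro t
    by_cases ht : t ∈ Set.Ioi (1 : ℝ)
    · rw [psiError, Set.indicator_of_mem ht, Set.indicator_of_mem ht, smul_eq_mul, mul_comm]
      congr 2; ring
    · rw [psiError, Set.indicator_of_notMem ht, Set.indicator_of_notMem ht, smul_zero]
  have hsub : Set.Ioi (0 : ℝ) ∩ Set.Ioi 1 = Set.Ioi 1 := by
    ext t; simp only [Set.mem_inter_iff, Set.mem_Ioi]; constructor
    · exact fun h => h.2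
    · exact fun h => ⟨by linarith, h⟩
  have hconv := mellinConvergent_psiError hs
  unfold MellinConvergent at hconv
  simp_rw [hind] at hconv
  rw [MeasureTheory.IntegrableOn, MeasureTheory.integrable_indicator_iff measurableSet_Ioi,
    MeasureTheory.IntegrableOn, MeasureTheory.Measure.restrict_restrict measurableSet_Ioi,
    Set.inter_comm, hsub] at hconv
  have hpow : MeasureTheory.IntegrableOn (fun t : ℝ => (t : ℂ) ^ (-s)) (Set.Ioi 1) :=
    integrableOn_Ioi_cpow_of_lt (by simpa using hs) one_pos
  have hInt : ∫ t in Set.Ioi (1 : ℝ), (t : ℂ) ^ (-s) = 1 / (s - 1) := by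
    rw [integral_Ioi_cpow_of_lt (by simpa using hs) one_pos, Complex.ofReal_one,
      Complex.one_cpow, ← neg_div_neg_eq]
    congr 1 <;> ring
  have hpsi : ∫ t in Set.Ioi (1 : ℝ), (Chebyshev.psi t : ℂ) * (t : ℂ) ^ (-(s + 1)) =
      (∫ t in Set.Ioi (1 : ℝ), ((Chebyshev.psi t - t : ℝ) : ℂ) * (t : ℂ) ^ (-(s + 1))) +
        1 / (s - 1) := by
    rw [← hInt, ← MeasureTheory.integral_add hconv hpow]
    refine MeasureTheory.setIntegral_congr_fun measurableSet_Ioi fun t ht => ?_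
    have ht0 : (t : ℂ) ≠ 0 := by
      have : (1 : ℝ) < t := ht
      exact_mod_cast (by linarith : t ≠ 0)
    have : (t : ℂ) ^ (-s) = t * (t : ℂ) ^ (-(s + 1)) := by
      rw [show -s = 1 + -(s + 1) by ring, Complex.cpow_add _ _ ht0, Complex.cpow_one]
    simp only [this, Complex.ofReal_sub]
    ring
  have hmel : mellin psiError (-s) =
      ∫ t in Set.Ioi (1 : ℝ), ((Chebyshev.psi t - t : ℝ) : ℂ) * (t : ℂ) ^ (-(s + 1)) := by
    unfold mellin
    simp_rw [hind]
    rw [MeasureTheory.setIntegral_indicator measurableSet_Ioi, hsub]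
  rw [psiTransform_eq hs1 hs0 (riemannZeta_ne_zero_of_one_le_re hs.le), hmel,
    vonMangoldt_LSeries_eq_integral hs, hpsi]
  field_simp
  ring

/-- `(log u)² (ψ(u) - u)` for `u > 1`, extended by zero. -/
noncomputable def logSqPsiError (u : ℝ) : ℂ := Real.log u • Real.log u • psiError u

lemma mellin_logSqPsiError {s : ℂ} (hs : 1 < s.re) :
    MellinConvergent logSqPsiError (-s) ∧
      iteratedDeriv 2 psiTransform s = mellin logSqPsiError (-s) := by
  have first : ∀ z : ℂ, 1 < z.re →
      HasDerivAt (mellin psiError) (mellin (fun t => Real.log t • psiError t) (-z)) (-z) := by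
    intro z hz
    refine (mellin_hasDerivAt_of_isBigO_rpow (a := -1) (b := -z.re - 1)
      (locallyIntegrable_psiError.locallyIntegrableOn _) psiError_isBigO_atTop
      (by simpa using hz) ?_ (by simp)).2
    exact psiError_eventually_eq_zero.trans_isBigO (Asymptotics.isBigO_zero _ _)
  have hloc : MeasureTheory.LocallyIntegrableOn (fun t => Real.log t • psiError t) (Set.Ioi 0) := by
    refine (locallyIntegrable_psiError.locallyIntegrableOn _).continuousOn_smul
      isOpen_Ioi.isLocallyClosed ?_
    exact Real.continuousOn_log.mono fun x hx => (show (0 : ℝ) < x from hx).ne'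
  set ε : ℝ := (s.re - 1) / 2 with hε
  have hε0 : 0 < ε := by linarith
  have hbig : (fun t => Real.log t • psiError t) =O[Filter.atTop]
      fun t : ℝ => t ^ (-(-1 - ε)) := by
    refine ((isLittleO_log_rpow_atTop hε0).isBigO.smul psiError_isBigO_atTop).congr'
      (Filter.EventuallyEq.refl _ _) ?_
    filter_upwards [Filter.eventually_gt_atTop 0] with t ht
    rw [smul_eq_mul, ← Real.rpow_add ht]
    congr 1; ring
  have hzero : (fun t => Real.log t • psiError t) =ᶠ[nhdsWithin 0 (Set.Ioi 0)] 0 := by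
    filter_upwards [psiError_eventually_eq_zero] with t ht
    rw [ht]; simp
  obtain ⟨hc, hd⟩ := mellin_hasDerivAt_of_isBigO_rpow (a := -1 - ε) (b := -s.re - 1) (s := -s)
    hloc hbig (by simp; linarith) (hzero.trans_isBigO (Asymptotics.isBigO_zero _ _)) (by simp)
  refine ⟨hc, ?_⟩
  have hopen : ∀ z : ℂ, 1 < z.re → {z : ℂ | 1 < z.re} ∈ nhds z := fun z hz =>
    (isOpen_lt continuous_const Complex.continuous_re).mem_nhds hz
  have hderiv : ∀ z : ℂ, 1 < z.re →
      deriv psiTransform z = -mellin (fun t => Real.log t • psiError t) (-z) := by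
    intro z hz
    have heq : psiTransform =ᶠ[nhds z] fun w => mellin psiError (-w) := by
      filter_upwards [hopen z hz] with w hw using (mellin_psiError_eq hw).symm
    rw [heq.deriv_eq]
    have h := (first z hz).comp z (hasDerivAt_neg z)
    rw [mul_neg_one] at h
    exact h.deriv
  rw [iteratedDeriv_succ, iteratedDeriv_one]
  have heq : deriv psiTransform =ᶠ[nhds s]
      fun w => -mellin (fun t => Real.log t • psiError t) (-w) := by
    filter_upwards [hopen s hs] with w hw using hderiv w hw
  rw [heq.deriv_eq]
  have h := (hd.comp s (hasDerivAt_neg s)).neg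
  rw [mul_neg_one, neg_neg] at h
  exact h.deriv

open FourierTransform in
lemma integral_schwartz_mul_eq (φ : SchwartzMap ℝ ℂ) (l w σ : ℝ) (hσ : 1 < σ) :
    ∫ u in Set.Ioi (0 : ℝ), φ (l * Real.log u - w) * ((u : ℂ) ^ (-(σ : ℂ) - 1) • logSqPsiError u) =
      ∫ t : ℝ, 𝓕 φ t * Complex.exp (((-(2 * Real.pi * (t * w)) : ℝ) : ℂ) * Complex.I) *
        mellin logSqPsiError (-((σ : ℂ) - ((2 * Real.pi * (t * l) : ℝ) : ℂ) * Complex.I)) := by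
  set q : ℝ → ℂ := fun u => (u : ℂ) ^ (-(σ : ℂ) - 1) • logSqPsiError u with hq
  have hqi : MeasureTheory.IntegrableOn q (Set.Ioi 0) :=
    (mellin_logSqPsiError (s := σ) (by simpa using hσ)).1
  have hφi : MeasureTheory.Integrable (fun t => 𝓕 φ t) := (𝓕 φ).integrable
  have hinv : ∀ x : ℝ, φ x =
      ∫ t : ℝ, Complex.exp (((2 * Real.pi * (t * x) : ℝ) : ℂ) * Complex.I) * 𝓕 φ t := by
    intro x
    have h : (𝓕⁻ (𝓕 φ : SchwartzMap ℝ ℂ) : SchwartzMap ℝ ℂ) = φ := fourierInv_fourier_eq φ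
    conv_lhs => rw [← h, SchwartzMap.fourierInv_coe]
    rw [Real.fourierInv_eq']
    refine MeasureTheory.integral_congr_ae (Filter.Eventually.of_forall fun t => ?_)
    simp [mul_comm x t]
  have hprod : MeasureTheory.Integrable (Function.uncurry fun (u t : ℝ) =>
      Complex.exp (((2 * Real.pi * (t * (l * Real.log u - w)) : ℝ) : ℂ) * Complex.I) *
        (q u * 𝓕 φ t)) ((MeasureTheory.volume.restrict (Set.Ioi 0)).prod MeasureTheory.volume) := by
    have h0 := MeasureTheory.Integrable.mul_prod (f := q) (g := fun t => 𝓕 φ t) hqi hφi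
    refine h0.mono ?_ (Filter.Eventually.of_forall fun p => ?_)
    · refine MeasureTheory.AEStronglyMeasurable.mul ?_ h0.aestronglyMeasurable
      exact (by fun_prop : Measurable fun p : ℝ × ℝ =>
        Complex.exp (((2 * Real.pi * (p.2 * (l * Real.log p.1 - w)) : ℝ) : ℂ)
          * Complex.I)).aestronglyMeasurable
    · simp only [Function.uncurry]
      rw [norm_mul, Complex.norm_exp_ofReal_mul_I, one_mul]
  calc ∫ u in Set.Ioi (0 : ℝ), φ (l * Real.log u - w) * q u
      = ∫ u in Set.Ioi (0 : ℝ), ∫ t : ℝ,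
          Complex.exp (((2 * Real.pi * (t * (l * Real.log u - w)) : ℝ) : ℂ) * Complex.I) *
            (q u * 𝓕 φ t) := by
        refine MeasureTheory.integral_congr_ae (Filter.Eventually.of_forall fun u => ?_)
        simp only
        rw [hinv, ← MeasureTheory.integral_mul_const]
        refine MeasureTheory.integral_congr_ae (Filter.Eventually.of_forall fun t => ?_)
        simp only; ring
    _ = ∫ t : ℝ, ∫ u in Set.Ioi (0 : ℝ),
          Complex.exp (((2 * Real.pi * (t * (l * Real.log u - w)) : ℝ) : ℂ) * Complex.I) *
            (q u * 𝓕 φ t) := MeasureTheory.integral_integral_swap hprod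
    _ = _ := by
        refine MeasureTheory.integral_congr_ae (Filter.Eventually.of_forall fun t => ?_)
        simp only [mellin]
        rw [← MeasureTheory.integral_const_mul]
        refine MeasureTheory.setIntegral_congr_fun measurableSet_Ioi fun u hu => ?_
        have hu0 : (u : ℂ) ≠ 0 := by exact_mod_cast (show (0 : ℝ) < u from hu).ne'
        have e1 : -((σ : ℂ) - ((2 * Real.pi * (t * l) : ℝ) : ℂ) * Complex.I) - 1 =
            ((2 * Real.pi * (t * l) : ℝ) : ℂ) * Complex.I + (-(σ : ℂ) - 1) := by ring
        simp only [hq, smul_eq_mul]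
        rw [e1, Complex.cpow_add _ _ hu0,
          Complex.cpow_def_of_ne_zero hu0 (((2 * Real.pi * (t * l) : ℝ) : ℂ) * Complex.I),
          ← Complex.ofReal_log (show (0 : ℝ) < u from hu).le]
        have e2 : Complex.exp (((2 * Real.pi * (t * (l * Real.log u - w)) : ℝ) : ℂ) * Complex.I) =
            Complex.exp (((-(2 * Real.pi * (t * w)) : ℝ) : ℂ) * Complex.I) *
            Complex.exp ((Real.log u : ℂ) * (((2 * Real.pi * (t * l) : ℝ) : ℂ) * Complex.I)) := by
          rw [← Complex.exp_add]; congr 1; push_cast; ring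
        rw [e2]; ring

lemma exists_norm_integral_schwartz_mul_le (φ : SchwartzMap ℝ ℂ) : ∃ C : ℝ, ∀ l w σ : ℝ, 1 < σ →
    σ ≤ 2 → ‖∫ u in Set.Ioi (0 : ℝ), φ (l * Real.log u - w) *
      ((u : ℂ) ^ (-(σ : ℂ) - 1) • logSqPsiError u)‖ ≤ C := by
  obtain ⟨C, hC⟩ := exists_norm_iteratedDeriv_psiTransform_le
  refine ⟨∫ t : ℝ, ‖FourierTransform.fourier φ t‖ * C, fun l w σ h1 h2 => ?_⟩
  rw [integral_schwartz_mul_eq φ l w σ h1]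
  refine MeasureTheory.norm_integral_le_of_norm_le
    ((FourierTransform.fourier φ).integrable.norm.mul_const C)
    (Filter.Eventually.of_forall fun t => ?_)
  rw [norm_mul, norm_mul, Complex.norm_exp_ofReal_mul_I, mul_one]
  have hre : ((σ : ℂ) - ((2 * Real.pi * (t * l) : ℝ) : ℂ) * Complex.I).re = σ := by simp
  rw [← (mellin_logSqPsiError (by rw [hre]; exact h1)).2]
  gcongr
  exact hC _ (by rw [hre]; exact h1.le) (by rw [hre]; exact h2)

lemma integral_comp_log_mul_inv {k : ℝ → ℝ} (hk : MeasureTheory.Integrable k) {V : ℝ} (hV : 0 < V)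
    (w : ℝ) :
    MeasureTheory.IntegrableOn (fun u => k (V * Real.log u - w) * u⁻¹) (Set.Ioi 0) ∧
      ∫ u in Set.Ioi (0 : ℝ), k (V * Real.log u - w) * u⁻¹ = V⁻¹ * ∫ t, k t := by
  have himage : Set.image Real.exp Set.univ = Set.Ioi (0 : ℝ) := by rw [Set.image_univ, Real.range_exp]
  have hderiv : ∀ x ∈ (Set.univ : Set ℝ), HasDerivWithinAt Real.exp (Real.exp x) Set.univ x :=
    fun x _ => (Real.hasDerivAt_exp x).hasDerivWithinAt
  have hfun : (fun x : ℝ => |Real.exp x| • (k (V * Real.log (Real.exp x) - w) * (Real.exp x)⁻¹)) =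
      fun x => k (V * x - w) := by
    funext x
    rw [Real.log_exp, smul_eq_mul, abs_of_pos (Real.exp_pos x), mul_left_comm,
      mul_inv_cancel₀ (Real.exp_pos x).ne', mul_one]
  constructor
  · rw [← himage, MeasureTheory.integrableOn_image_iff_integrableOn_abs_deriv_smul
      MeasurableSet.univ hderiv Real.exp_injective.injOn, hfun, MeasureTheory.integrableOn_univ]
    exact (hk.comp_sub_right w).comp_mul_left' hV.ne'
  · rw [← himage, MeasureTheory.integral_image_eq_integral_abs_deriv_smul
      MeasurableSet.univ hderiv Real.exp_injective.injOn, hfun, MeasureTheory.setIntegral_univ,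
      MeasureTheory.Measure.integral_comp_mul_left (fun x => k (x - w)),
      MeasureTheory.integral_sub_right_eq_self, abs_of_pos (inv_pos.2 hV), smul_eq_mul]

lemma integrableOn_schwartz_mul (φ : SchwartzMap ℝ ℂ) (l w : ℝ) {σ : ℝ} (hσ : 1 < σ) :
    MeasureTheory.IntegrableOn (fun u : ℝ => φ (l * Real.log u - w) *
      ((u : ℂ) ^ (-(σ : ℂ) - 1) • logSqPsiError u)) (Set.Ioi 0) := by
  refine MeasureTheory.Integrable.bdd_mul (c := SchwartzMap.seminorm ℝ 0 0 φ)
    (mellin_logSqPsiError (s := σ) (by simpa using hσ)).1 ?_ (Filter.Eventually.of_forall fun u => ?_)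
  · exact (φ.continuous.measurable.comp (by fun_prop)).aestronglyMeasurable
  · exact SchwartzMap.norm_le_seminorm ℝ φ _

lemma cpow_smul_logSqPsiError {u σ : ℝ} (hu : 1 < u) :
    (u : ℂ) ^ (-(σ : ℂ) - 1) • logSqPsiError u =
      ((u⁻¹ * Real.exp (-(Real.log u * σ)) * Real.log u ^ 2 * (Chebyshev.psi u - u) : ℝ) : ℂ) := by
  have hu0 : 0 < u := by linarith
  have h1 : (u : ℂ) ^ (-(σ : ℂ) - 1) = ((u⁻¹ * Real.exp (-(Real.log u * σ)) : ℝ) : ℂ) := by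
    rw [show (-(σ : ℂ) - 1) = ((-σ - 1 : ℝ) : ℂ) by push_cast; ring,
      ← Complex.ofReal_cpow hu0.le, Real.rpow_sub hu0, Real.rpow_one, Real.rpow_def_of_pos hu0,
      mul_neg]
    congr 1; ring
  rw [h1, logSqPsiError, psiError, Set.indicator_of_mem (show u ∈ Set.Ioi 1 from hu)]
  simp only [smul_eq_mul, Complex.real_smul, ← Complex.ofReal_mul]
  congr 1; ring

/-- If `ψ(u) - u` is one-signed and of size at least `d e^V` on a logarithmic window of length
`1 / V` next to `e^V`, then `d = O(1 / V)`. -/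
lemma exists_le_div_of_le_on_window : ∃ C : ℝ, ∀ V w ε d : ℝ, 2 ≤ V → V ^ 2 - 1 ≤ w →
    w ≤ V ^ 2 → |ε| = 1 → 0 ≤ d →
    (∀ u, 0 < u → w ≤ V * Real.log u → V * Real.log u ≤ w + 1 →
      d * Real.exp V ≤ ε * (Chebyshev.psi u - u)) → d ≤ C / V := by
  let b : ContDiffBump (1 / 2 : ℝ) := ⟨1 / 4, 1 / 2, by norm_num, by norm_num⟩
  set k : ℝ → ℝ := b.normed MeasureTheory.volume with hk
  have hcs : HasCompactSupport (fun x => (k x : ℂ)) :=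
    b.hasCompactSupport_normed.comp_left (g := fun x : ℝ => (x : ℂ)) Complex.ofReal_zero
  have hsm : ContDiff ℝ (⊤ : ℕ∞) (fun x => (k x : ℂ)) :=
    Complex.ofRealCLM.contDiff.comp b.contDiff_normed
  have hsupp : ∀ x, k x ≠ 0 → 0 ≤ x ∧ x ≤ 1 := by
    intro x hx
    have : x ∈ Function.support k := hx
    rw [hk, b.support_normed_eq, Metric.mem_ball, Real.dist_eq, abs_lt] at this
    change -(1 / 2) < _ ∧ _ < (1 / 2 : ℝ) at this
    constructor <;> linarith [this.1, this.2]
  obtain ⟨C, hC⟩ := exists_norm_integral_schwartz_mul_le (hcs.toSchwartzMap hsm)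
  refine ⟨4 * Real.exp 3 * C, fun V w ε d hV hw1 hw2 hε hd h => ?_⟩
  have hV0 : 0 < V := by linarith
  have hVi : V⁻¹ ≤ 1 := inv_le_one_of_one_le₀ (by linarith)
  have hVi0 : 0 < V⁻¹ := inv_pos.2 hV0
  have hVV : V * V⁻¹ = 1 := mul_inv_cancel₀ hV0.ne'
  have hC' := hC V w (1 + V⁻¹) (by linarith) (by linarith)
  have hInt := integrableOn_schwartz_mul (hcs.toSchwartzMap hsm) V w (σ := 1 + V⁻¹) (by linarith)
  set f : ℝ → ℂ := fun u : ℝ => (hcs.toSchwartzMap hsm) (V * Real.log u - w) *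
      ((u : ℂ) ^ (-((1 + V⁻¹ : ℝ) : ℂ) - 1) • logSqPsiError u) with hf
  obtain ⟨hki, hkv⟩ := integral_comp_log_mul_inv (k := k) b.integrable_normed hV0 w
  rw [b.integral_normed, mul_one] at hkv
  set m : ℝ := Real.exp (-3) * (V ^ 2 / 4) * d with hm
  have hpt : ∀ u ∈ Set.Ioi (0 : ℝ), m * (k (V * Real.log u - w) * u⁻¹) ≤ ε * (f u).re := by
    intro u hu
    have hu0 : (0 : ℝ) < u := hu
    have hfu : f u = (k (V * Real.log u - w) : ℂ) *
      ((u : ℂ) ^ (-((1 + V⁻¹ : ℝ) : ℂ) - 1) • logSqPsiError u) := rfl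
    by_cases hk0 : k (V * Real.log u - w) = 0
    · rw [hfu, hk0]; simp
    obtain ⟨h1, h2⟩ := hsupp _ hk0
    have hlow : V - V⁻¹ ≤ Real.log u := by
      have : V * (V - V⁻¹) ≤ V * Real.log u := by rw [mul_sub, hVV]; nlinarith
      exact le_of_mul_le_mul_left this hV0
    have hupp : Real.log u ≤ V + V⁻¹ := by
      have : V * Real.log u ≤ V * (V + V⁻¹) := by rw [mul_add, hVV]; nlinarith
      exact le_of_mul_le_mul_left this hV0
    have hu1 : 1 < u := (Real.log_pos_iff hu0.le).1 (by linarith)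
    have hknn : 0 ≤ k (V * Real.log u - w) := b.nonneg_normed _
    have hwin := h u hu0 (by linarith) (by linarith)
    rw [hfu, cpow_smul_logSqPsiError hu1, ← Complex.ofReal_mul, Complex.ofReal_re]
    have hexp : Real.exp (-3) * Real.exp (-V) ≤ Real.exp (-(Real.log u * (1 + V⁻¹))) := by
      rw [← Real.exp_add, Real.exp_le_exp]
      nlinarith
    have hlog : V ^ 2 / 4 ≤ Real.log u ^ 2 := by nlinarith
    have hVe : Real.exp (-V) * Real.exp V = 1 := by rw [← Real.exp_add]; simp
    calc m * (k (V * Real.log u - w) * u⁻¹)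
        = k (V * Real.log u - w) * u⁻¹ * ((Real.exp (-3) * Real.exp (-V)) * (V ^ 2 / 4) *
          (d * Real.exp V)) := by
          rw [hm]; linear_combination (-(k (V * Real.log u - w) * u⁻¹ * Real.exp (-3) *
            (V ^ 2 / 4) * d)) * hVe
      _ ≤ k (V * Real.log u - w) * u⁻¹ * (Real.exp (-(Real.log u * (1 + V⁻¹))) *
          Real.log u ^ 2 * (ε * (Chebyshev.psi u - u))) := by gcongr
      _ = _ := by ring
  have hmono := MeasureTheory.setIntegral_mono_on (hki.const_mul m)
    ((hInt.re).const_mul ε) measurableSet_Ioi hpt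
  rw [MeasureTheory.integral_const_mul, MeasureTheory.integral_const_mul, hkv] at hmono
  have hre : ∫ u in Set.Ioi (0 : ℝ), (f u).re = (∫ u in Set.Ioi (0 : ℝ), f u).re := integral_re hInt
  have hle : ε * ∫ u in Set.Ioi (0 : ℝ), (f u).re ≤ C := by
    calc _ ≤ |ε * ∫ u in Set.Ioi (0 : ℝ), (f u).re| := le_abs_self _
      _ = |(∫ u in Set.Ioi (0 : ℝ), f u).re| := by rw [abs_mul, hε, one_mul, hre]
      _ ≤ _ := (Complex.abs_re_le_norm _).trans hC'
  have hfin : m * V⁻¹ ≤ C := hmono.trans hle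
  have h3 : Real.exp 3 * Real.exp (-3) = 1 := by rw [← Real.exp_add]; simp
  rw [le_div_iff₀ hV0]
  calc d * V = 4 * Real.exp 3 * (m * V⁻¹) := by
        rw [hm]; linear_combination (-(V * d)) * h3 - Real.exp 3 * Real.exp (-3) * V * d * hVV
    _ ≤ 4 * Real.exp 3 * C := by gcongr

/-- The prime number theorem with a weak error term, for `ψ`. -/
lemma exists_abs_psi_sub_self_le :
    ∃ C : ℝ, ∀ x : ℝ, Real.exp 2 ≤ x → |Chebyshev.psi x - x| ≤ C * (x / Real.log x) := by
  obtain ⟨C, hC⟩ := exists_le_div_of_le_on_window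
  refine ⟨max C 0 + 2, fun x hx => ?_⟩
  have hx0 : 0 < x := (Real.exp_pos 2).trans_le hx
  set V := Real.log x with hVdef
  have hV : 2 ≤ V := (Real.le_log_iff_exp_le hx0).2 hx
  have hexpV : Real.exp V = x := Real.exp_log hx0
  have hV0 : 0 < V := by linarith
  have hVi : V⁻¹ ≤ 1 / 2 := by
    rw [one_div]; exact inv_anti₀ (by norm_num) hV
  have hVi0 : 0 < V⁻¹ := inv_pos.2 hV0
  have hVV : V * V⁻¹ = 1 := mul_inv_cancel₀ hV0.ne'
  have hCm := le_max_left C 0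
  have hCn := le_max_right C 0
  rw [abs_le]
  constructor
  · by_contra! hlt
    set d : ℝ := (x - Chebyshev.psi x) / x - V⁻¹ with hd
    have hdx : d * x = x - Chebyshev.psi x - x * V⁻¹ := by rw [hd]; field_simp
    have hlow : (max C 0 + 1) * V⁻¹ < d := by
      have : (max C 0 + 1) * V⁻¹ * x < d * x := by
        rw [hdx]; rw [div_eq_mul_inv] at hlt; linarith
      exact lt_of_mul_lt_mul_right this hx0.le
    have hd0 : 0 ≤ d := le_trans (by positivity) hlow.le
    have := hC V (V ^ 2 - 1) (-1) d hV le_rfl (by linarith) (by simp) hd0 fun u hu h1 h2 => by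
      have hlog1 : V - V⁻¹ ≤ Real.log u := by
        have : V * (V - V⁻¹) ≤ V * Real.log u := by rw [mul_sub, hVV]; linarith
        exact le_of_mul_le_mul_left this hV0
      have hlog2 : Real.log u ≤ V := by
        have : V * Real.log u ≤ V * V := by linarith
        exact le_of_mul_le_mul_left this hV0
      have hux : u ≤ x := (Real.log_le_log_iff hu hx0).1 hlog2
      have hxu : x * (1 - V⁻¹) ≤ u := by
        calc x * (1 - V⁻¹) ≤ x * Real.exp (-V⁻¹) := by
              gcongr; linarith [Real.add_one_le_exp (-V⁻¹)]
          _ = Real.exp (V - V⁻¹) := by rw [sub_eq_add_neg, Real.exp_add, hexpV]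
          _ ≤ u := (Real.le_log_iff_exp_le hu).1 hlog1
      have hmono := Chebyshev.psi_mono hux
      rw [hexpV, hdx]; linarith
    rw [div_eq_mul_inv] at this
    nlinarith
  · by_contra! hlt
    set d : ℝ := (Chebyshev.psi x - x) / x - 2 * V⁻¹ with hd
    have hdx : d * x = Chebyshev.psi x - x - 2 * x * V⁻¹ := by rw [hd]; field_simp
    have hlow : max C 0 * V⁻¹ < d := by
      have : max C 0 * V⁻¹ * x < d * x := by
        rw [hdx]; rw [div_eq_mul_inv] at hlt; linarith
      exact lt_of_mul_lt_mul_right this hx0.le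
    have hd0 : 0 ≤ d := le_trans (by positivity) hlow.le
    have := hC V (V ^ 2) 1 d hV (by linarith) le_rfl (by simp) hd0 fun u hu h1 h2 => by
      have hlog1 : Real.log u ≤ V + V⁻¹ := by
        have : V * Real.log u ≤ V * (V + V⁻¹) := by rw [mul_add, hVV]; linarith
        exact le_of_mul_le_mul_left this hV0
      have hlog2 : V ≤ Real.log u := by
        have : V * V ≤ V * Real.log u := by linarith
        exact le_of_mul_le_mul_left this hV0
      have hux : x ≤ u := (Real.log_le_log_iff hx0 hu).1 hlog2
      have hxu : u ≤ x * (1 + 2 * V⁻¹) := by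
        have hone : 1 + V⁻¹ * 2 ≥ Real.exp V⁻¹ := by
          have h1 := Real.add_one_le_exp (-V⁻¹)
          have h2 : Real.exp V⁻¹ * Real.exp (-V⁻¹) = 1 := by rw [← Real.exp_add]; simp
          have h3 := Real.exp_pos V⁻¹
          nlinarith
        calc u ≤ Real.exp (V + V⁻¹) := (Real.log_le_iff_le_exp hu).1 hlog1
          _ = x * Real.exp V⁻¹ := by rw [Real.exp_add, hexpV]
          _ ≤ x * (1 + 2 * V⁻¹) := by gcongr; linarith
      have hmono := Chebyshev.psi_mono hux
      rw [hexpV, hdx]; linarith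
    rw [div_eq_mul_inv] at this
    nlinarith

/-- The prime number theorem with a weak error term, for `θ`. -/
lemma exists_abs_theta_sub_self_le :
    ∃ A : ℝ, 0 ≤ A ∧ ∀ x : ℝ, 2 ≤ x → |Chebyshev.theta x - x| ≤ A * (x / Real.log x) := by
  obtain ⟨C, hC⟩ := exists_abs_psi_sub_self_le
  obtain ⟨D, hD⟩ := Chebyshev.psi_sub_theta_le_mul_sqrt
  refine ⟨max C 0 + 2 * max D 0 + 12, by positivity, fun x hx => ?_⟩
  have hx0 : 0 < x := by linarith
  have hlog : 0 < Real.log x := Real.log_pos (by linarith)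
  have hq : 0 < x / Real.log x := by positivity
  rcases le_or_gt (Real.exp 2) x with h | h
  · have h1 := abs_le.1 (hC x h)
    have h2 := hD x
    have h3 := Chebyshev.theta_le_psi x
    have h4 : √x ≤ 2 * (x / Real.log x) := by
      have h5 : Real.log x ≤ 2 * √x := by
        have h6 := Real.log_le_sub_one_of_pos (Real.sqrt_pos.2 hx0)
        rw [Real.log_sqrt hx0.le] at h6
        linarith
      rw [← mul_div_assoc, le_div_iff₀ hlog]
      nlinarith [Real.sq_sqrt hx0.le, Real.sqrt_nonneg x]
    have h7 : D * √x ≤ max D 0 * (2 * (x / Real.log x)) :=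
      mul_le_mul (le_max_left _ _) h4 (Real.sqrt_nonneg x) (le_max_right _ _)
    have h8 : C * (x / Real.log x) ≤ max C 0 * (x / Real.log x) := by
      gcongr; exact le_max_left _ _
    have h9 : 0 ≤ max D 0 * (x / Real.log x) := mul_nonneg (le_max_right _ _) hq.le
    rw [abs_le]
    constructor <;> linarith [h1.1, h1.2]
  · have h1 : Real.log x ≤ 2 := ((Real.log_lt_iff_lt_exp hx0).2 h).le
    have h2 := Chebyshev.theta_nonneg x
    have h3 := Chebyshev.theta_le_psi x
    have h4 := Chebyshev.psi_le_const_mul_self hx0.le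
    have h5 : Real.log 4 ≤ 2 := by
      rw [show (4 : ℝ) = 2 ^ 2 by norm_num, Real.log_pow]
      have := Real.log_two_lt_d9
      push_cast; linarith
    have h6 : x ≤ 2 * (x / Real.log x) := by
      rw [← mul_div_assoc, le_div_iff₀ hlog]
      nlinarith
    have h7 : 0 ≤ max C 0 * (x / Real.log x) := mul_nonneg (le_max_right _ _) hq.le
    have h8 : 0 ≤ max D 0 * (x / Real.log x) := mul_nonneg (le_max_right _ _) hq.le
    rw [abs_le]
    constructor <;> nlinarith

lemma abs_rpow_add_one_sub_rpow_sub_le {γ : ℝ} (hγ1 : 0 < γ) (hγ2 : γ < 1) {t : ℝ} (ht : 0 < t) :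
    |(t + 1) ^ γ - t ^ γ - γ * t ^ (γ - 1)| ≤ t ^ (γ - 1) - (t + 1) ^ (γ - 1) := by
  obtain ⟨c, hc, hc'⟩ := exists_hasDerivAt_eq_slope (fun u : ℝ => u ^ γ)
    (fun u => γ * u ^ (γ - 1)) (lt_add_one t)
    (continuousOn_id.rpow_const fun u _ => Or.inr hγ1.le)
    (fun u hu => Real.hasDerivAt_rpow_const (Or.inl (ht.trans hu.1).ne'))
  have hslope : (t + 1) ^ γ - t ^ γ = γ * c ^ (γ - 1) := by
    rw [hc', add_sub_cancel_left, div_one]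
  have h1 : c ^ (γ - 1) ≤ t ^ (γ - 1) :=
    Real.rpow_le_rpow_of_nonpos ht hc.1.le (by linarith)
  have h2 : (t + 1) ^ (γ - 1) ≤ c ^ (γ - 1) :=
    Real.rpow_le_rpow_of_nonpos (ht.trans hc.1) hc.2.le (by linarith)
  rw [hslope, abs_le]
  constructor <;> nlinarith

lemma abs_sum_prime_sub_sum_prime_le {γ : ℝ} (hγ1 : 0 < γ) (hγ2 : γ < 1) (N : ℕ) :
    |∑ p ∈ (range (N + 1)).filter Nat.Prime, (((p : ℝ) + 1) ^ γ - (p : ℝ) ^ γ) -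
      ∑ p ∈ (range (N + 1)).filter Nat.Prime, γ * (p : ℝ) ^ (γ - 1)| ≤ 1 := by
  rw [← sum_sub_distrib]
  calc _ ≤ ∑ p ∈ (range (N + 1)).filter Nat.Prime,
        ((p : ℝ) ^ (γ - 1) - ((p : ℝ) + 1) ^ (γ - 1)) :=
        (abs_sum_le_sum_abs _ _).trans (sum_le_sum fun p hp =>
          abs_rpow_add_one_sub_rpow_sub_le hγ1 hγ2 (by exact_mod_cast (mem_filter.1 hp).2.pos))
    _ ≤ ∑ p ∈ Ico 1 (N + 1), ((p : ℝ) ^ (γ - 1) - ((p : ℝ) + 1) ^ (γ - 1)) := by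
        refine sum_le_sum_of_subset_of_nonneg (fun p hp => ?_) fun p hp _ => ?_
        · rw [mem_filter, mem_range] at hp
          exact mem_Ico.2 ⟨hp.2.one_le, hp.1⟩
        · exact (abs_nonneg _).trans (abs_rpow_add_one_sub_rpow_sub_le hγ1 hγ2
            (by exact_mod_cast (mem_Ico.1 hp).1))
    _ = 1 - ((N : ℝ) + 1) ^ (γ - 1) := by
        have := sum_range_sub' (fun n : ℕ => ((n : ℝ) + 1) ^ (γ - 1)) N
        rw [sum_Ico_eq_sum_range, Nat.add_sub_cancel]
        simpa [add_comm, add_left_comm, add_assoc] using this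
    _ ≤ 1 := by
        have : (0 : ℝ) ≤ ((N : ℝ) + 1) ^ (γ - 1) := by positivity
        linarith

section Asymptotics

variable {γ u : ℝ}

lemma hasDerivAt_rpow_div_log (a : ℝ) (hu : 1 < u) :
    HasDerivAt (fun v : ℝ => v ^ a / Real.log v)
      (a * u ^ (a - 1) / Real.log u - u ^ (a - 1) / Real.log u ^ 2) u := by
  have hu0 : u ≠ 0 := by linarith
  have hl : Real.log u ≠ 0 := (Real.log_pos hu).ne'
  refine ((Real.hasDerivAt_rpow_const (p := a) (Or.inl hu0)).div
    (Real.hasDerivAt_log hu0) hl).congr_deriv ?_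
  rw [Real.rpow_sub_one hu0]
  field_simp

lemma hasDerivAt_rpow_div_log_sq (a : ℝ) (hu : 1 < u) :
    HasDerivAt (fun v : ℝ => v ^ a / Real.log v ^ 2)
      (a * u ^ (a - 1) / Real.log u ^ 2 - 2 * u ^ (a - 1) / Real.log u ^ 3) u := by
  have hu0 : u ≠ 0 := by linarith
  have hl : Real.log u ≠ 0 := (Real.log_pos hu).ne'
  refine ((Real.hasDerivAt_rpow_const (p := a) (Or.inl hu0)).div ((Real.hasDerivAt_log hu0).pow 2)
    (pow_ne_zero 2 hl)).congr_deriv ?_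
  rw [Pi.pow_apply, Real.rpow_sub_one hu0]
  field_simp
  norm_num
  ring

lemma intervalIntegrable_rpow_div_log_pow (a : ℝ) (k : ℕ) {b c : ℝ} (hb : 1 < b) (hc : 1 < c) :
    IntervalIntegrable (fun u : ℝ => u ^ a / Real.log u ^ k) MeasureTheory.volume b c := by
  refine ContinuousOn.intervalIntegrable fun u hu => ContinuousAt.continuousWithinAt ?_
  have hu1 : 1 < u := (lt_min hb hc).trans_le hu.1
  exact (Real.continuousAt_rpow_const u a (Or.inl (by linarith))).div
    ((Real.continuousAt_log (by linarith)).pow k) (pow_ne_zero k (Real.log_pos hu1).ne')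

lemma exists_const_le_rpow_div_log_sq (hγ : 0 < γ) (K : ℝ) :
    ∃ C : ℝ, ∀ x : ℝ, 2 ≤ x → K ≤ C * (x ^ γ / Real.log x ^ 2) := by
  refine ⟨|K| * (4 / γ ^ 2), fun x hx => ?_⟩
  have hlog : 0 < Real.log x := Real.log_pos (by linarith)
  have h1 := Real.log_le_rpow_div (show 0 ≤ x by linarith) (half_pos hγ)
  have h2 : Real.log x ^ 2 ≤ 4 / γ ^ 2 * x ^ γ := by
    calc Real.log x ^ 2 ≤ (x ^ (γ / 2) / (γ / 2)) ^ 2 := by gcongr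
      _ = 4 / γ ^ 2 * x ^ γ := by
        rw [div_pow, ← Real.rpow_natCast, ← Real.rpow_mul (by linarith)]
        norm_num
        field_simp
        norm_num
  have h3 : 1 ≤ 4 / γ ^ 2 * (x ^ γ / Real.log x ^ 2) := by
    rw [← mul_div_assoc, le_div_iff₀ (by positivity), one_mul]
    exact h2
  calc K ≤ |K| * 1 := by rw [mul_one]; exact le_abs_self K
    _ ≤ |K| * (4 / γ ^ 2 * (x ^ γ / Real.log x ^ 2)) := by gcongr
    _ = _ := by ring

lemma exists_integral_rpow_div_log_sq_le (hγ : 0 < γ) : ∃ C x₀ : ℝ, 2 ≤ x₀ ∧ ∀ x : ℝ, x₀ ≤ x →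
    ∫ u in (2 : ℝ)..x, u ^ (γ - 1) / Real.log u ^ 2 ≤ C * (x ^ γ / Real.log x ^ 2) := by
  set U : ℝ := max 2 (Real.exp (4 / γ)) with hU
  have hU2 : 2 ≤ U := le_max_left _ _
  obtain ⟨K, hK⟩ := exists_const_le_rpow_div_log_sq hγ
    (∫ u in (2 : ℝ)..U, u ^ (γ - 1) / Real.log u ^ 2)
  refine ⟨K + 2 / γ, U, hU2, fun x hx => ?_⟩
  have hInt : ∀ b c : ℝ, 2 ≤ b → 2 ≤ c → IntervalIntegrable
      (fun u : ℝ => u ^ (γ - 1) / Real.log u ^ 2) MeasureTheory.volume b c := fun b c hb hc =>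
    intervalIntegrable_rpow_div_log_pow (γ - 1) 2 (by linarith) (by linarith)
  rw [← intervalIntegral.integral_add_adjacent_intervals (hInt 2 U le_rfl hU2)
    (hInt U x hU2 (hU2.trans hx)), add_mul]
  refine add_le_add (hK x (hU2.trans hx)) ?_
  have hder : ∀ u ∈ Set.uIcc U x, HasDerivAt (fun v : ℝ => v ^ γ / Real.log v ^ 2)
      (γ * u ^ (γ - 1) / Real.log u ^ 2 - 2 * u ^ (γ - 1) / Real.log u ^ 3) u := by
    intro u hu
    rw [Set.uIcc_of_le hx] at hu
    exact hasDerivAt_rpow_div_log_sq γ (by linarith [hu.1])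
  have hder_int : IntervalIntegrable (fun u : ℝ => γ * u ^ (γ - 1) / Real.log u ^ 2 -
      2 * u ^ (γ - 1) / Real.log u ^ 3) MeasureTheory.volume U x := by
    simp_rw [mul_div_assoc]
    exact ((hInt U x hU2 (hU2.trans hx)).const_mul γ).sub
      ((intervalIntegrable_rpow_div_log_pow (γ - 1) 3 (by linarith) (by linarith)).const_mul 2)
  have hfund := intervalIntegral.integral_eq_sub_of_hasDerivAt hder hder_int
  have hle : ∫ u in U..x, γ / 2 * (u ^ (γ - 1) / Real.log u ^ 2) ≤
      x ^ γ / Real.log x ^ 2 - U ^ γ / Real.log U ^ 2 := by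
    rw [← hfund]
    refine intervalIntegral.integral_mono_on hx
      ((hInt U x hU2 (hU2.trans hx)).const_mul _) hder_int fun u hu => ?_
    have hu1 : 1 < u := by linarith [hu.1]
    have hlog : 4 / γ ≤ Real.log u :=
      (Real.le_log_iff_exp_le (by linarith)).2 ((le_max_right _ _).trans hu.1)
    have hlog0 : 0 < Real.log u := Real.log_pos hu1
    have hγlog : 2 / Real.log u ≤ γ / 2 := by
      rw [div_le_iff₀ hγ] at hlog
      rw [div_le_div_iff₀ hlog0 two_pos]
      linarith
    have hq : 0 ≤ u ^ (γ - 1) / Real.log u ^ 2 := by positivity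
    have heq : γ * u ^ (γ - 1) / Real.log u ^ 2 - 2 * u ^ (γ - 1) / Real.log u ^ 3 =
        (γ - 2 / Real.log u) * (u ^ (γ - 1) / Real.log u ^ 2) := by
      field_simp
    rw [heq]
    gcongr
    linarith
  rw [intervalIntegral.integral_const_mul] at hle
  have hU0 : 0 ≤ U ^ γ / Real.log U ^ 2 := by positivity
  have : ∫ u in U..x, u ^ (γ - 1) / Real.log u ^ 2 =
      2 / γ * (γ / 2 * ∫ u in U..x, u ^ (γ - 1) / Real.log u ^ 2) := by
    field_simp
  rw [this]
  gcongr
  linarith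

/-- Abel summation for `∑ γ p ^ (γ - 1)` over primes. -/
lemma sum_prime_rpow_eq_theta_sub_integral (γ : ℝ) {x : ℝ} (hx : 2 ≤ x) :
    ∑ p ∈ (range (⌊x⌋₊ + 1)).filter Nat.Prime, γ * (p : ℝ) ^ (γ - 1) =
      γ * (x ^ (γ - 1) / Real.log x) * Chebyshev.theta x -
        ∫ u in (2 : ℝ)..x, γ * ((γ - 1) * u ^ (γ - 1 - 1) / Real.log u -
          u ^ (γ - 1 - 1) / Real.log u ^ 2) * Chebyshev.theta u := by
  let a : ℕ → ℝ := fun n => if n.Prime then Real.log n else 0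
  have ha : ∀ y : ℝ, ∑ n ∈ Icc 0 ⌊y⌋₊, a n = Chebyshev.theta y := by
    intro y
    rw [Chebyshev.theta_eq_sum_Icc, sum_filter]
  have hder : ∀ u ∈ Set.Icc 2 x, HasDerivAt (fun v : ℝ => γ * (v ^ (γ - 1) / Real.log v))
      (γ * ((γ - 1) * u ^ (γ - 1 - 1) / Real.log u - u ^ (γ - 1 - 1) / Real.log u ^ 2)) u :=
    fun u hu => (hasDerivAt_rpow_div_log (γ - 1) (by linarith [hu.1])).const_mul γ
  trans ∑ n ∈ Icc 0 ⌊x⌋₊, γ * ((n : ℝ) ^ (γ - 1) / Real.log n) * a n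
  · rw [range_eq_Ico, sum_filter]
    refine sum_congr rfl fun n _ => ?_
    by_cases h : n.Prime
    · have : Real.log n ≠ 0 := (Real.log_pos (by exact_mod_cast h.one_lt)).ne'
      simp only [a, h, if_true]
      field_simp
    · simp [a, h]
  rw [sum_mul_eq_sub_integral_mul₁ a (f := fun v : ℝ => γ * (v ^ (γ - 1) / Real.log v))
    (by simp [a]) (by simp [a, Nat.not_prime_one]), ← intervalIntegral.integral_of_le hx]
  · rw [ha]
    congr 1
    refine intervalIntegral.integral_congr fun u hu => ?_
    rw [Set.uIcc_of_le hx] at hu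
    simp only [ha, (hder u hu).deriv]
  · exact fun u hu => (hder u hu).differentiableAt
  · refine (MeasureTheory.integrableOn_congr_fun (fun u hu => (hder u hu).deriv)
      measurableSet_Icc).2 ?_
    rw [← intervalIntegrable_iff_integrableOn_Icc_of_le hx]
    have h1 := intervalIntegrable_rpow_div_log_pow (γ - 1 - 1) 1 (b := 2) (c := x)
      (by norm_num) (by linarith)
    have h2 := intervalIntegrable_rpow_div_log_pow (γ - 1 - 1) 2 (b := 2) (c := x)
      (by norm_num) (by linarith)
    simp only [pow_one] at h1
    simp_rw [mul_div_assoc]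
    exact ((h1.const_mul _).sub h2).const_mul _

end Asymptotics

lemma abs_sum_prime_rpow_sub_le {γ A : ℝ} (hγ1 : 0 < γ) (hγ2 : γ < 1) (hA : 0 ≤ A)
    (hθ : ∀ x : ℝ, 2 ≤ x → |Chebyshev.theta x - x| ≤ A * (x / Real.log x)) {x : ℝ} (hx : 2 ≤ x) :
    |∑ p ∈ (range (⌊x⌋₊ + 1)).filter Nat.Prime, γ * (p : ℝ) ^ (γ - 1) - x ^ γ / Real.log x| ≤
      A * (x ^ γ / Real.log x ^ 2) + |γ * (2 ^ γ / Real.log 2) - 2 ^ γ / Real.log 2| +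
        (1 + 3 * A) * ∫ u in (2 : ℝ)..x, u ^ (γ - 1) / Real.log u ^ 2 := by
  set g' : ℝ → ℝ := fun u => γ * ((γ - 1) * u ^ (γ - 1 - 1) / Real.log u -
    u ^ (γ - 1 - 1) / Real.log u ^ 2) with hg'
  set r : ℝ → ℝ := fun u => u ^ (γ - 1) / Real.log u ^ 2 - g' u * (Chebyshev.theta u - u) with hr
  have hx1 : 1 < x := by linarith
  have hlogx : 0 < Real.log x := Real.log_pos hx1
  have hcont : ContinuousOn g' (Set.uIcc 2 x) := by
    intro u hu
    rw [Set.uIcc_of_le hx] at hu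
    have hu0 : u ≠ 0 := by linarith [hu.1]
    have hl : Real.log u ≠ 0 := (Real.log_pos (by linarith [hu.1])).ne'
    have hp : ContinuousAt (fun v : ℝ => v ^ (γ - 1 - 1)) u :=
      Real.continuousAt_rpow_const u _ (Or.inl hu0)
    have hlc := Real.continuousAt_log hu0
    exact (((((hp.const_mul (γ - 1)).div hlc hl).sub (hp.div (hlc.pow 2)
      (pow_ne_zero 2 hl)))).const_mul γ).continuousWithinAt
  have hJ : IntervalIntegrable (fun u : ℝ => u ^ (γ - 1) / Real.log u ^ 2)
      MeasureTheory.volume 2 x := intervalIntegrable_rpow_div_log_pow _ 2 (by norm_num) hx1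
  have hgθ : IntervalIntegrable (fun u => g' u * Chebyshev.theta u) MeasureTheory.volume 2 x :=
    Chebyshev.theta_mono.intervalIntegrable.continuousOn_mul hcont
  have hgid : IntervalIntegrable (fun u => g' u * u) MeasureTheory.volume 2 x :=
    (hcont.mul continuousOn_id).intervalIntegrable
  have hri : IntervalIntegrable r MeasureTheory.volume 2 x := by
    have : r = fun u => u ^ (γ - 1) / Real.log u ^ 2 - (g' u * Chebyshev.theta u - g' u * u) := by
      funext u; simp only [hr]; ring
    rw [this]
    exact hJ.sub (hgθ.sub hgid)
  have hfund : ∫ u in (2 : ℝ)..x, (u ^ (γ - 1) / Real.log u ^ 2 + g' u * u) =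
      (γ * (x ^ γ / Real.log x) - x ^ γ / Real.log x) -
        (γ * (2 ^ γ / Real.log 2) - 2 ^ γ / Real.log 2) := by
    refine intervalIntegral.integral_eq_sub_of_hasDerivAt
      (f := fun v : ℝ => γ * (v ^ γ / Real.log v) - v ^ γ / Real.log v) (fun u hu => ?_)
      (hJ.add hgid)
    rw [Set.uIcc_of_le hx] at hu
    have hu0 : u ≠ 0 := by linarith [hu.1]
    have hd := hasDerivAt_rpow_div_log γ (show 1 < u by linarith [hu.1])
    refine ((hd.const_mul γ).sub hd).congr_deriv ?_
    simp only [hg']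
    rw [Real.rpow_sub_one hu0 (γ - 1)]
    field_simp
    ring
  have hsplit : ∫ u in (2 : ℝ)..x, r u = (∫ u in (2 : ℝ)..x,
      (u ^ (γ - 1) / Real.log u ^ 2 + g' u * u)) - ∫ u in (2 : ℝ)..x, g' u * Chebyshev.theta u := by
    rw [← intervalIntegral.integral_sub (hJ.add hgid) hgθ]
    refine intervalIntegral.integral_congr fun u _ => ?_
    simp only [hr]; ring
  have hkey : ∑ p ∈ (range (⌊x⌋₊ + 1)).filter Nat.Prime, γ * (p : ℝ) ^ (γ - 1) -
      x ^ γ / Real.log x = γ * (x ^ (γ - 1) / Real.log x) * (Chebyshev.theta x - x) +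
        (γ * (2 ^ γ / Real.log 2) - 2 ^ γ / Real.log 2) + ∫ u in (2 : ℝ)..x, r u := by
    have hp : x ^ (γ - 1) * x = x ^ γ := by
      rw [Real.rpow_sub_one (show x ≠ 0 by linarith), div_mul_cancel₀ _ (by linarith)]
    rw [sum_prime_rpow_eq_theta_sub_integral γ hx, hsplit, hfund]
    linear_combination γ / Real.log x * hp
  have hrb : ∀ u ∈ Set.Icc 2 x, |r u| ≤ (1 + 3 * A) * (u ^ (γ - 1) / Real.log u ^ 2) := by
    intro u hu
    have hu0 : 0 < u := by linarith [hu.1]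
    have hl : 0 < Real.log u := Real.log_pos (by linarith [hu.1])
    have hl2 : 1 ≤ 2 * Real.log u := by
      have := Real.log_two_gt_d9
      have := Real.log_le_log two_pos hu.1
      linarith
    have hp : 0 < u ^ (γ - 1 - 1) := Real.rpow_pos_of_pos hu0 _
    have hq : u ^ (γ - 1 - 1) / Real.log u ^ 2 ≤ 2 * (u ^ (γ - 1 - 1) / Real.log u) := by
      rw [← mul_div_assoc, div_le_div_iff₀ (by positivity) hl]
      nlinarith [mul_pos hp hl]
    have hq0 : 0 < u ^ (γ - 1 - 1) / Real.log u := by positivity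
    have hq2 : 0 < u ^ (γ - 1 - 1) / Real.log u ^ 2 := by positivity
    have hgb : |g' u| ≤ 3 * (u ^ (γ - 1 - 1) / Real.log u) := by
      simp only [hg', mul_div_assoc]
      rw [abs_mul, abs_of_pos hγ1]
      have : |(γ - 1) * (u ^ (γ - 1 - 1) / Real.log u) - u ^ (γ - 1 - 1) / Real.log u ^ 2| ≤
          3 * (u ^ (γ - 1 - 1) / Real.log u) := by
        rw [abs_le]; constructor <;> nlinarith
      nlinarith
    have hnn : 0 ≤ u ^ (γ - 1) / Real.log u ^ 2 := by positivity
    calc |r u| ≤ |u ^ (γ - 1) / Real.log u ^ 2| + |g' u * (Chebyshev.theta u - u)| := abs_sub _ _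
      _ ≤ u ^ (γ - 1) / Real.log u ^ 2 +
          3 * (u ^ (γ - 1 - 1) / Real.log u) * (A * (u / Real.log u)) := by
          rw [abs_of_nonneg hnn, abs_mul]
          gcongr
          exact hθ u hu.1
      _ = _ := by
          rw [Real.rpow_sub_one hu0.ne' (γ - 1)]
          field_simp
  have hInt : |∫ u in (2 : ℝ)..x, r u| ≤
      (1 + 3 * A) * ∫ u in (2 : ℝ)..x, u ^ (γ - 1) / Real.log u ^ 2 := by
    rw [← intervalIntegral.integral_const_mul]
    exact (intervalIntegral.abs_integral_le_integral_abs hx).trans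
      (intervalIntegral.integral_mono_on hx hri.abs (hJ.const_mul _) hrb)
  have hmain : |γ * (x ^ (γ - 1) / Real.log x) * (Chebyshev.theta x - x)| ≤
      A * (x ^ γ / Real.log x ^ 2) := by
    have hpos : 0 ≤ x ^ (γ - 1) / Real.log x := by positivity
    calc _ = γ * (x ^ (γ - 1) / Real.log x) * |Chebyshev.theta x - x| := by
          rw [abs_mul, abs_of_nonneg (by positivity)]
      _ ≤ 1 * (x ^ (γ - 1) / Real.log x) * (A * (x / Real.log x)) := by
          gcongr
          exact hθ x hx
      _ = _ := by
          rw [Real.rpow_sub_one (show x ≠ 0 by linarith)]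
          field_simp
  rw [hkey]
  exact (abs_add_three _ _ _).trans (by gcongr)

/-- For `0 < γ < 1`,
`Σ_{p ≤ x} ((p+1)^γ - p^γ) = x^γ/log x + O(x^γ/(log x)²)`. -/
theorem sum_prime_power_differences (γ : ℝ) (hγ1 : 0 < γ) (hγ2 : γ < 1) :
    ∃ C : ℝ, 0 < C ∧ ∃ x₀ : ℝ, ∀ x : ℝ, x₀ ≤ x →
      |(∑ p ∈ (Finset.range (⌊x⌋₊ + 1)).filter Nat.Prime,
          (((p : ℝ) + 1) ^ γ - (p : ℝ) ^ γ)) - x ^ γ / Real.log x| ≤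
        C * (x ^ γ / (Real.log x) ^ 2) := by
  obtain ⟨A, hA, hθ⟩ := exists_abs_theta_sub_self_le
  obtain ⟨J, x₀, hx₀, hJ⟩ := exists_integral_rpow_div_log_sq_le hγ1
  obtain ⟨K, hK⟩ := exists_const_le_rpow_div_log_sq hγ1
    (1 + |γ * (2 ^ γ / Real.log 2) - 2 ^ γ / Real.log 2|)
  refine ⟨max (K + A + (1 + 3 * A) * J) 1, by positivity, x₀, fun x hx => ?_⟩
  have hx2 : 2 ≤ x := hx₀.trans hx
  have h1 := abs_sum_prime_sub_sum_prime_le hγ1 hγ2 ⌊x⌋₊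
  have h2 := abs_sum_prime_rpow_sub_le hγ1 hγ2 hA hθ hx2
  have h3 : (1 + 3 * A) * ∫ u in (2 : ℝ)..x, u ^ (γ - 1) / Real.log u ^ 2 ≤
      (1 + 3 * A) * (J * (x ^ γ / Real.log x ^ 2)) := by
    gcongr
    exact hJ x hx
  have h4 := hK x hx2
  have h5 : 0 ≤ x ^ γ / Real.log x ^ 2 := by positivity
  refine (abs_sub_le _ _ _).trans ((add_le_add h1 h2).trans ?_)
  calc _ ≤ (K + A + (1 + 3 * A) * J) * (x ^ γ / Real.log x ^ 2) := by linarith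
    _ ≤ _ := by
      gcongr
      exact le_max_left _ _
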